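/- If C is a permutation class containing only finitely many simple permutations, then the generating function of the set of Dumont permutations of the first kind in C is algebraic over ℚ[x]. -/

import Mathlib

/-- A permutation of length `n`. -/
abbrev Perm (n : ℕ) := Equiv.Perm (Fin n)

/-- `σ` is contained in `π`: there is a strictly increasing sequence of indices of `π`
on which `π` is order isomorphic to `σ`. -/
def Contains {m n : ℕ} (σ : Perm m) (π : Perm n) : Prop :=
  ∃ f : Fin m → Fin n, StrictMono f ∧ ∀ s t : Fin m, π (f s) < π (f t) ↔ σ s < σ t

/-- A permutation class: a downset in the containment order. -/
def IsPermClass (C : ∀ n, Set (Perm n)) : Prop :=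
  ∀ ⦃m n : ℕ⦄ (σ : Perm m) (π : Perm n), π ∈ C n → Contains σ π → σ ∈ C m

/-- A set of contiguous values. -/
def IsRange {n : ℕ} (I : Finset (Fin n)) : Prop :=
  ∀ ⦃i j l : Fin n⦄, i ∈ I → l ∈ I → i ≤ j → j ≤ l → j ∈ I

/-- An interval of `π`: a set of contiguous indices mapped to a set of contiguous values. -/
def IsPermInterval {n : ℕ} (π : Perm n) (I : Finset (Fin n)) : Prop :=
  IsRange I ∧ IsRange (I.image π)

/-- A permutation is simple if its only intervals have size `0`, `1`, or `n`. -/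
def IsSimple {n : ℕ} (π : Perm n) : Prop :=
  ∀ I : Finset (Fin n), IsPermInterval π I → I.card ≤ 1 ∨ I.card = n

/-- The set of simple permutations belonging to the class `C` is finite. -/
def FinitelyManySimples (C : ∀ n, Set (Perm n)) : Prop :=
  {p : Σ n : ℕ, Perm n | p.2 ∈ C p.1 ∧ IsSimple p.2}.Finite

/-- The generating function `∑_{n ≥ 1} |S_n| xⁿ` of a set of permutations. -/
noncomputable def genFun (S : ∀ n, Set (Perm n)) : PowerSeries ℚ :=
  PowerSeries.mk fun n => if n = 0 then 0 else (Nat.card (S n) : ℚ)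

/-- A power series `f` is algebraic over `ℚ[x]` if there is a nonzero polynomial
`P(x,y) ∈ ℚ[x][y]` with `P(x,f) = 0`. -/
def IsAlgebraicOverQx (f : PowerSeries ℚ) : Prop :=
  ∃ P : Polynomial (Polynomial ℚ), P ≠ 0 ∧
    Polynomial.eval₂ Polynomial.coeToPowerSeries.ringHom f P = 0

/-- `π` is a Dumont permutation of the first kind.  (Entries are `0`-based here, so the
entry at position `i` has `1`-based value `π i + 1`.)  Every even value is immediately
followed by a smaller value, and every odd value is immediately followed by a larger
value or occurs last. -/
def Dumont {n : ℕ} (π : Perm n) : Prop :=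
  ∀ i : Fin n,
    (Even ((π i : ℕ) + 1) → ∃ h : (i : ℕ) + 1 < n, π ⟨(i : ℕ) + 1, h⟩ < π i) ∧
    (Odd ((π i : ℕ) + 1) →
      (i : ℕ) + 1 = n ∨ ∃ h : (i : ℕ) + 1 < n, π i < π ⟨(i : ℕ) + 1, h⟩)

section PolynomialSystems

open MvPolynomial

theorem Derivation.map_aeval_eq_sum_pderiv {K L M Q : Type*} [CommRing K] [CommRing L] [Algebra K L]
    [AddCommGroup M] [Module K M] [Module L M] [IsScalarTower K L M] [Fintype Q]
    (D : Derivation K L M) (F : Q → L) (p : MvPolynomial Q K) :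
    D (aeval F p) = ∑ r, aeval F (pderiv r p) • D (F r) := by
  classical
  induction p using MvPolynomial.induction_on with
  | C a => simp
  | add p q hp hq => simp [hp, hq, add_smul, Finset.sum_add_distrib]
  | mul_X p i hp =>
    simp only [map_mul, aeval_X, Derivation.leibniz, hp, smul_eq_mul, map_add, add_smul,
      Finset.sum_add_distrib, pderiv_X, Finset.smul_sum, smul_smul]
    congr 1
    rw [Finset.sum_eq_single i]
    · simp
    · intro b _ hb
      simp [hb.symm]
    · simp

theorem isAlgebraic_of_det_ne_zero {K L Q : Type*} [Field K] [Field L] [Algebra K L] [CharZero K]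
    [Fintype Q] [DecidableEq Q] (F : Q → L) (hgen : IntermediateField.adjoin K (Set.range F) = ⊤)
    (P : Q → MvPolynomial Q K) (hP : ∀ q, F q = aeval F (P q))
    (hdet : (1 - Matrix.of fun q r => aeval F (pderiv r (P q))).det ≠ 0) :
    Algebra.IsAlgebraic K L := by
  set A : Matrix Q Q L := 1 - Matrix.of fun q r => aeval F (pderiv r (P q)) with hA
  let D := KaehlerDifferential.D K L
  have h1 : ∀ q, ∑ r, A q r • D (F r) = 0 := by
    intro q
    have := D.map_aeval_eq_sum_pderiv F (P q)
    rw [← hP q] at this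
    simp only [hA, Matrix.sub_apply, sub_smul, Finset.sum_sub_distrib, Matrix.of_apply, ← this,
      Matrix.one_apply, ite_smul, one_smul, zero_smul]
    simp
  have h2 : ∀ r, D (F r) = 0 := by
    intro r
    have h3 : ∑ q, A.adjugate r q • ∑ s, A q s • D (F s) = A.det • D (F r) := by
      simp only [Finset.smul_sum, smul_smul]
      rw [Finset.sum_comm]
      simp only [← Finset.sum_smul, ← Matrix.mul_apply, Matrix.adjugate_mul, Matrix.smul_apply,
        Matrix.one_apply]
      simp
    simp only [h1, smul_zero, Finset.sum_const_zero] at h3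
    exact (smul_eq_zero.mp h3.symm).resolve_left hdet
  have h3 : ∀ x : L, D x = 0 := by
    intro x
    have hx : x ∈ IntermediateField.adjoin K (Set.range F) := hgen ▸ IntermediateField.mem_top
    induction hx using IntermediateField.adjoin_induction with
    | mem x hx => obtain ⟨r, rfl⟩ := hx; exact h2 r
    | algebraMap x => simp
    | add x y _ _ hx hy => simp [hx, hy]
    | inv x _ hx => rw [Derivation.leibniz_inv, hx, smul_zero]
    | mul x y _ _ hx hy => simp [hx, hy]
  have h4 : Subsingleton (Ω[L⁄K]) := by
    rw [← Submodule.subsingleton_iff L, ← subsingleton_iff_bot_eq_top,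
      ← KaehlerDifferential.span_range_derivation, eq_comm, Submodule.span_eq_bot]
    rintro _ ⟨x, rfl⟩
    exact h3 x
  have h5 : Algebra.FormallyUnramified K L := ⟨h4⟩
  have h6 : Algebra.EssFiniteType K (⊤ : IntermediateField K L) :=
    IntermediateField.essFiniteType_iff.mpr
      (hgen ▸ IntermediateField.fg_adjoin_of_finite (Set.finite_range F))
  have h7 : Algebra.EssFiniteType K L :=
    (Algebra.EssFiniteType.iff_of_algEquiv IntermediateField.topEquiv).mp h6
  have := (Algebra.FormallyUnramified.iff_isSeparable K L).mp h5
  infer_instance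

theorem isAlgebraic_apply_of_det_ne_zero {K E Q : Type*} [Field K] [Field E] [Algebra K E]
    [CharZero K] [Fintype Q] [DecidableEq Q] (F : Q → E)
    (P : Q → MvPolynomial Q K) (hP : ∀ q, F q = aeval F (P q))
    (hdet : (1 - Matrix.of fun q r => aeval F (pderiv r (P q))).det ≠ 0) (q : Q) :
    IsAlgebraic K (F q) := by
  let L := IntermediateField.adjoin K (Set.range F)
  let F' : Q → L := fun q => ⟨F q, IntermediateField.subset_adjoin _ _ ⟨q, rfl⟩⟩
  have hF' : ∀ p : MvPolynomial Q K, algebraMap L E (aeval F' p) = aeval F p := fun p => by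
    rw [← aeval_algebraMap_apply]
    rfl
  have : Algebra.IsAlgebraic K L := by
    refine isAlgebraic_of_det_ne_zero F' ?_ P (fun q => Subtype.ext ?_) ?_
    · apply IntermediateField.lift_injective L
      rw [IntermediateField.lift_adjoin, IntermediateField.lift_top, ← Set.range_comp]
      rfl
    · rw [show ((aeval F' (P q) : L) : E) = _ from hF' (P q)]; exact hP q
    · intro h
      apply hdet
      have := congrArg (algebraMap L E) h
      rw [RingHom.map_det, map_zero] at this
      rw [← this, map_sub, map_one]
      congr 2
      ext i j
      exact (hF' _).symm
  exact (this.isAlgebraic (F' q)).algebraMap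

theorem MvPolynomial.constantCoeff_aeval_pderiv_mul {Q : Type*} {F : Q → PowerSeries ℚ}
    {u v : MvPolynomial Q (Polynomial ℚ)} (hu : PowerSeries.constantCoeff (aeval F u) = 0)
    (hv : PowerSeries.constantCoeff (aeval F v) = 0) (r : Q) :
    PowerSeries.constantCoeff (aeval F (pderiv r (u * v))) = 0 := by
  simp [Derivation.leibniz, hu, hv]

theorem isAlgebraicOverQx_iff (f : PowerSeries ℚ) :
    IsAlgebraicOverQx f ↔ IsAlgebraic (Polynomial ℚ) f := Iff.rfl

/-- The solutions without constant term of a polynomial system, each of whose terms is a polynomial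
in `x` or a product of at least two unknowns, are algebraic. -/
theorem isAlgebraic_of_system {Q : Type*} [Fintype Q] (F : Q → PowerSeries ℚ)
    (hF : ∀ q, PowerSeries.constantCoeff (F q) = 0) (κ : Q → Type*) [∀ q, Fintype (κ q)]
    (m : ∀ q, κ q → ℕ) (hm : ∀ q k, 2 ≤ m q k) (t : ∀ q k, Fin (m q k) → Q)
    (c : Q → Polynomial ℚ)
    (h : ∀ q, F q = c q + ∑ k, ∏ i, F (t q k i)) (q : Q) : IsAlgebraic (Polynomial ℚ) (F q) := by
  classical
  let R := Polynomial ℚ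
  let K := FractionRing R
  let E := FractionRing (PowerSeries ℚ)
  have : FaithfulSMul R E := by
    rw [faithfulSMul_iff_algebraMap_injective, IsScalarTower.algebraMap_eq R (PowerSeries ℚ) E]
    exact (IsFractionRing.injective (PowerSeries ℚ) E).comp (Polynomial.coe_injective ℚ)
  let : Algebra K E := FractionRing.liftAlgebra R E
  let P : Q → MvPolynomial Q R := fun q => C (c q) + ∑ k, ∏ i, X (t q k i)
  have hP : ∀ q, F q = aeval F (P q) := fun q => by
    rw [h q]
    simp [P]
    rfl
  let F' : Q → E := fun q => algebraMap _ E (F q)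
  have key : IsAlgebraic K (F' q) := by
    have hmap : ∀ p : MvPolynomial Q R,
        aeval F' (map (algebraMap R K) p) = algebraMap (PowerSeries ℚ) E (aeval F p) := fun p => by
      rw [aeval_map_algebraMap, ← aeval_algebraMap_apply]
      rfl
    refine isAlgebraic_apply_of_det_ne_zero F' (fun q => map (algebraMap R K) (P q)) ?_ ?_ q
    · intro q
      rw [hmap, ← hP]
    · have h1 : (1 - Matrix.of fun q r => aeval F' (pderiv r (map (algebraMap R K) (P q)))) =
          (algebraMap (PowerSeries ℚ) E).mapMatrix
            (1 - Matrix.of fun q r => aeval F (pderiv r (P q))) := by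
        rw [map_sub, map_one]
        congr 1
        ext i j
        simp [pderiv_map, hmap]
      rw [h1, ← RingHom.map_det]
      refine (map_ne_zero_iff _ (IsFractionRing.injective (PowerSeries ℚ) E)).mpr fun h0 => ?_
      have h2 := congrArg PowerSeries.constantCoeff h0
      rw [RingHom.map_det, map_sub, map_one, map_zero] at h2
      have h3 : PowerSeries.constantCoeff.mapMatrix
          (Matrix.of fun q r => aeval F (pderiv r (P q))) = 0 := by
        ext q r
        simp only [RingHom.mapMatrix_apply, Matrix.map_apply, Matrix.of_apply, Matrix.zero_apply, P,
          map_add, map_sum, pderiv_C, zero_add]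
        refine Finset.sum_eq_zero fun k _ => ?_
        generalize t q k = t'
        have := hm q k
        generalize m q k = m' at this t'
        obtain ⟨m', rfl⟩ := Nat.exists_eq_add_of_le' this
        rw [Fin.prod_univ_succ]
        apply constantCoeff_aeval_pderiv_mul
        · simp [hF]
        · rw [Fin.prod_univ_succ]
          simp [hF]
      rw [h3] at h2
      simp at h2
  have := (IsFractionRing.isAlgebraic_iff R K E).mpr key
  exact (isAlgebraic_algebraMap_iff (IsFractionRing.injective (PowerSeries ℚ) E)).mp this

end PolynomialSystems

/-- The generating function counting the elements of a type by size. -/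
noncomputable def sizeGenFun {T : Type*} (s : T → ℕ) : PowerSeries ℚ :=
  PowerSeries.mk fun n => (Nat.card {x // s x = n} : ℚ)

theorem sizeGenFun_congr {T T' : Type*} {s : T → ℕ} {s' : T' → ℕ} (e : T ≃ T')
    (h : ∀ x, s' (e x) = s x) : sizeGenFun s = sizeGenFun s' := by
  ext n
  simp only [sizeGenFun, PowerSeries.coeff_mk]
  rw [Nat.card_congr (e.subtypeEquiv (q := fun y => s' y = n) fun x => by rw [h])]

theorem sizeGenFun_sigma {κ : Type*} [Fintype κ] {T : κ → Type*} (s : ∀ k, T k → ℕ)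
    (hs : ∀ k n, Finite {x // s k x = n}) :
    sizeGenFun (fun x : Σ k, T k => s x.1 x.2) = ∑ k, sizeGenFun (s k) := by
  ext n
  simp only [sizeGenFun, PowerSeries.coeff_mk, map_sum]
  rw [← Nat.cast_sum, ← Nat.card_sigma]
  refine congrArg _ (Nat.card_congr ?_)
  exact
    { toFun := fun x => ⟨x.1.1, x.1.2, x.2⟩
      invFun := fun x => ⟨⟨x.1, x.2.1⟩, x.2.2⟩
      left_inv := fun _ => rfl
      right_inv := fun _ => rfl }

theorem sizeGenFun_sum {T T' : Type*} (s : T → ℕ) (s' : T' → ℕ)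
    (hs : ∀ n, Finite {x // s x = n}) (hs' : ∀ n, Finite {x // s' x = n}) :
    sizeGenFun (Sum.elim s s') = sizeGenFun s + sizeGenFun s' := by
  ext n
  simp only [sizeGenFun, PowerSeries.coeff_mk, map_add]
  rw [← Nat.cast_add, ← Nat.card_sum]
  exact congrArg _ (Nat.card_congr Equiv.subtypeSum)

theorem sizeGenFun_pi {m : ℕ} {T : Fin m → Type*} (s : ∀ i, T i → ℕ)
    (hs : ∀ i n, Finite {x // s i x = n}) :
    sizeGenFun (fun x : ∀ i, T i => ∑ i, s i (x i)) = ∏ i, sizeGenFun (s i) := by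
  classical
  ext n
  rw [PowerSeries.coeff_prod]
  simp only [sizeGenFun, PowerSeries.coeff_mk]
  rw [← Finset.sum_coe_sort]
  simp only [← Nat.cast_prod, ← Nat.card_pi]
  rw [← Nat.cast_sum, ← Nat.card_sigma]
  have key : ∀ x : (Σ l : Finset.finsuppAntidiag (Finset.univ : Finset (Fin m)) n,
      ∀ i, {y // s i y = l.1 i}), ∑ i, s i (x.2 i).1 = n := by
    rintro ⟨⟨l, hl⟩, x⟩
    simp only [Finset.mem_finsuppAntidiag] at hl
    exact (Finset.sum_congr rfl fun i _ => (x i).2).trans hl.1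
  refine congrArg _ (Nat.card_congr (Equiv.ofBijective
    (fun x => ⟨fun i => (x.2 i).1, key x⟩) ⟨?_, ?_⟩).symm)
  · rintro ⟨⟨l, hl⟩, x⟩ ⟨⟨l', hl'⟩, x'⟩ h
    have h1 : ∀ i, (x i).1 = (x' i).1 := congrFun (congrArg Subtype.val h)
    obtain rfl : l = l' := by
      ext i
      exact (x i).2.symm.trans ((congrArg (s i) (h1 i)).trans (x' i).2)
    obtain rfl : x = x' := funext fun i => Subtype.ext (h1 i)
    rfl
  · rintro ⟨x, hx⟩
    exact ⟨⟨⟨Finsupp.equivFunOnFinite.symm fun i => s i (x i), by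
      simpa [Finset.mem_finsuppAntidiag] using hx⟩, fun i => ⟨x i, rfl⟩⟩, rfl⟩

theorem Perm.ext_of_lt_iff {n : ℕ} {π τ : Perm n} (h : ∀ s t, π s < π t ↔ τ s < τ t) : π = τ := by
  have hm : StrictMono fun x => π (τ.symm x) := fun x y hxy => by
    rw [h]; simpa using hxy
  have h1 := hm.eq_id
  ext s
  have := congrFun h1 (τ s)
  simp at this
  rw [this]

theorem Contains.refl {n : ℕ} (π : Perm n) : Contains π π :=
  ⟨id, strictMono_id, fun _ _ => Iff.rfl⟩

theorem Contains.trans {l m n : ℕ} {ρ : Perm l} {σ : Perm m} {π : Perm n} (h : Contains ρ σ)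
    (h' : Contains σ π) : Contains ρ π := by
  obtain ⟨f, hf, hf'⟩ := h
  obtain ⟨g, hg, hg'⟩ := h'
  exact ⟨g ∘ f, hg.comp hf, fun s t => (hg' _ _).trans (hf' _ _)⟩

theorem Contains.length_le {m n : ℕ} {σ : Perm m} {π : Perm n} (h : Contains σ π) : m ≤ n := by
  obtain ⟨f, hf, -⟩ := h
  simpa using Fintype.card_le_of_injective f hf.injective

/-- A permutation of any length. -/
abbrev SizedPerm := Σ n : ℕ, Perm n

theorem Contains.sigma_eq {m n : ℕ} {σ : Perm m} {π : Perm n} (h : Contains σ π) (hn : n ≤ m) :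
    (⟨m, σ⟩ : SizedPerm) = ⟨n, π⟩ := by
  obtain rfl : m = n := le_antisymm h.length_le hn
  obtain ⟨f, hf, hf'⟩ := h
  have : f = id := hf.eq_id
  subst this
  rw [Perm.ext_of_lt_iff hf']

theorem sum_fin_castLE_eq {m : ℕ} (n : Fin m → ℕ) (k : Fin m) :
    ∑ i : Fin k, n (Fin.castLE k.2.le i) = ∑ i ∈ Finset.Iio k, n i := by
  refine Finset.sum_bij (fun i _ => Fin.castLE k.2.le i) ?_ ?_ ?_ ?_
  · intro i _
    simp [Fin.lt_def]
  · intro i _ j _ h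
    simpa using h
  · intro j hj
    exact ⟨⟨j, by simpa using hj⟩, by simp, rfl⟩
  · intro i _
    rfl

theorem sum_Iio_add_lt_iff {m : ℕ} (n : Fin m → ℕ) {i j : Fin m} {a b : ℕ} (ha : a < n i)
    (hb : b < n j) : ∑ k ∈ Finset.Iio i, n k + a < ∑ k ∈ Finset.Iio j, n k + b ↔
      i < j ∨ i = j ∧ a < b := by
  have key : ∀ {i j : Fin m}, i < j →
      ∑ k ∈ Finset.Iio i, n k + n i ≤ ∑ k ∈ Finset.Iio j, n k := by
    intro i j hij
    rw [add_comm, ← Finset.sum_insert (by simp)]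
    refine Finset.sum_le_sum_of_subset fun x hx => ?_
    simp only [Finset.mem_insert, Finset.mem_Iio] at hx ⊢
    rcases hx with rfl | hx
    · exact hij
    · exact hx.trans hij
  rcases lt_trichotomy i j with h | rfl | h
  · have := key h
    simp only [h, true_or, iff_true]
    omega
  · simp
  · have := key h
    simp only [h.not_gt, h.ne', false_and, or_self, iff_false]
    omega

section Inflation

variable {m : ℕ}

/-- The position of the `a`-th entry of the `i`-th block in an inflation by `α`. -/
def blockPos (α : Fin m → SizedPerm) (i : Fin m) (a : Fin (α i).1) : Fin (∑ i, (α i).1) :=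
  finSigmaFinEquiv ⟨i, a⟩

/-- The inflation `σ[α₁, …, α_m]`. -/
def inflate (σ : Perm m) (α : Fin m → SizedPerm) : Perm (∑ i, (α i).1) :=
  finSigmaFinEquiv.symm.trans
    ((Equiv.sigmaCongr σ fun i => (α i).2.trans (finCongr (by simp))).trans
      ((finSigmaFinEquiv (n := fun j => (α (σ.symm j)).1)).trans
        (finCongr (Equiv.sum_comp σ.symm fun i => (α i).1))))

theorem exists_eq_blockPos (α : Fin m → SizedPerm) (p : Fin (∑ i, (α i).1)) :
    ∃ i a, p = blockPos α i a := by
  obtain ⟨⟨i, a⟩, rfl⟩ := finSigmaFinEquiv.surjective p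
  exact ⟨i, a, rfl⟩

theorem blockPos_val (α : Fin m → SizedPerm) (i : Fin m) (a : Fin (α i).1) :
    (blockPos α i a : ℕ) = ∑ k ∈ Finset.Iio i, (α k).1 + a := by
  rw [blockPos, finSigmaFinEquiv_apply, ← sum_fin_castLE_eq]

theorem inflate_blockPos_val (σ : Perm m) (α : Fin m → SizedPerm) (i : Fin m) (a : Fin (α i).1) :
    (inflate σ α (blockPos α i a) : ℕ) =
      ∑ k ∈ Finset.Iio (σ i), (α (σ.symm k)).1 + (α i).2 a := by
  have h : (inflate σ α (blockPos α i a) : ℕ) =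
      finSigmaFinEquiv (n := fun j => (α (σ.symm j)).1)
        ⟨σ i, finCongr (by simp) ((α i).2 a)⟩ := by
    simp only [inflate, blockPos, Equiv.trans_apply, Equiv.symm_apply_apply]
    rfl
  rw [h, finSigmaFinEquiv_apply]
  exact congrArg (· + _) (sum_fin_castLE_eq (fun k => (α (σ.symm k)).1) (σ i))

theorem blockPos_lt_iff (α : Fin m → SizedPerm) {i j : Fin m} {a : Fin (α i).1}
    {b : Fin (α j).1} :
    blockPos α i a < blockPos α j b ↔ i < j ∨ i = j ∧ (a : ℕ) < b := by
  rw [Fin.lt_def, blockPos_val, blockPos_val]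
  exact sum_Iio_add_lt_iff (fun i => (α i).1) a.2 b.2

theorem inflate_lt_iff (σ : Perm m) (α : Fin m → SizedPerm) {i j : Fin m} {a : Fin (α i).1}
    {b : Fin (α j).1} :
    inflate σ α (blockPos α i a) < inflate σ α (blockPos α j b) ↔
      σ i < σ j ∨ i = j ∧ ((α i).2 a : ℕ) < (α j).2 b := by
  rw [Fin.lt_def, inflate_blockPos_val, inflate_blockPos_val,
    sum_Iio_add_lt_iff (fun i => (α (σ.symm i)).1) (by simp) (by simp), σ.injective.eq_iff]

theorem blockPos_lt_iff_of_ne (α : Fin m → SizedPerm) {i j : Fin m} (h : i ≠ j) {a : Fin (α i).1}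
    {b : Fin (α j).1} : blockPos α i a < blockPos α j b ↔ i < j := by
  simp [blockPos_lt_iff, h]

theorem blockPos_strictMono (α : Fin m → SizedPerm) (i : Fin m) : StrictMono (blockPos α i) :=
  fun _ _ h => (blockPos_lt_iff α).mpr (Or.inr ⟨rfl, h⟩)

theorem inflate_lt_iff_of_ne (σ : Perm m) (α : Fin m → SizedPerm) {i j : Fin m} (h : i ≠ j)
    {a : Fin (α i).1} {b : Fin (α j).1} :
    inflate σ α (blockPos α i a) < inflate σ α (blockPos α j b) ↔ σ i < σ j := by
  simp [inflate_lt_iff, h]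

theorem inflate_lt_iff_same (σ : Perm m) (α : Fin m → SizedPerm) {i : Fin m}
    {a b : Fin (α i).1} :
    inflate σ α (blockPos α i a) < inflate σ α (blockPos α i b) ↔ (α i).2 a < (α i).2 b := by
  simp [inflate_lt_iff]

theorem inflate_contains_block (σ : Perm m) (α : Fin m → SizedPerm) (i : Fin m) :
    Contains (α i).2 (inflate σ α) :=
  ⟨blockPos α i, blockPos_strictMono α i, fun _ _ => inflate_lt_iff_same σ α⟩

theorem inflate_contains_quotient (σ : Perm m) (α : Fin m → SizedPerm) (hα : ∀ i, 0 < (α i).1) :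
    Contains σ (inflate σ α) := by
  refine ⟨fun i => blockPos α i ⟨0, hα i⟩, fun i j h => (blockPos_lt_iff α).mpr (Or.inl h),
    fun i j => ?_⟩
  by_cases h : i = j
  · subst h; simp
  · exact inflate_lt_iff_of_ne σ α h

/-- A criterion for a permutation to be a given inflation. -/
theorem eq_inflate {n : ℕ} {π : Perm n} {σ : Perm m} {α : Fin m → SizedPerm}
    (g : ∀ i, Fin (α i).1 → Fin n) (hg : ∀ i, StrictMono (g i))
    (hg' : ∀ i j, i < j → ∀ a b, g i a < g j b) (hsurj : ∀ p, ∃ i a, g i a = p)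
    (hπ : ∀ i a b, π (g i a) < π (g i b) ↔ (α i).2 a < (α i).2 b)
    (hπ' : ∀ i j, i ≠ j → ∀ a b, π (g i a) < π (g j b) ↔ σ i < σ j) :
    (⟨n, π⟩ : SizedPerm) = ⟨_, inflate σ α⟩ := by
  let f : Fin (∑ i, (α i).1) → Fin n := fun p =>
    g (finSigmaFinEquiv.symm p).1 (finSigmaFinEquiv.symm p).2
  have hf : ∀ i a, f (blockPos α i a) = g i a := fun i a => by
    have : finSigmaFinEquiv.symm (blockPos α i a) = ⟨i, a⟩ := Equiv.symm_apply_apply _ _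
    simp only [f]
    rw [this]
  have hfs : Function.Surjective f := fun p => by
    obtain ⟨i, a, rfl⟩ := hsurj p
    exact ⟨_, hf i a⟩
  refine (Contains.sigma_eq (σ := inflate σ α) (π := π) ⟨f, ?_, ?_⟩ ?_).symm
  · intro p q h
    obtain ⟨i, a, rfl⟩ := exists_eq_blockPos α p
    obtain ⟨j, b, rfl⟩ := exists_eq_blockPos α q
    rw [hf, hf]
    by_cases hij : i = j
    · subst hij
      exact hg i ((blockPos_strictMono α i).lt_iff_lt.mp h)
    · exact hg' i j ((blockPos_lt_iff_of_ne α hij).mp h) a b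
  · intro p q
    obtain ⟨i, a, rfl⟩ := exists_eq_blockPos α p
    obtain ⟨j, b, rfl⟩ := exists_eq_blockPos α q
    rw [hf, hf]
    by_cases hij : i = j
    · subst hij
      rw [hπ, inflate_lt_iff_same]
    · rw [hπ' i j hij, inflate_lt_iff_of_ne σ α hij]
  · simpa using Fintype.card_le_of_surjective f hfs

end Inflation

theorem exists_perm_lt_iff {k : ℕ} {A : Type*} [LinearOrder A] (v : Fin k → A)
    (hv : Function.Injective v) : ∃ σ : Perm k, ∀ a b, σ a < σ b ↔ v a < v b := by
  let e := (Finset.univ.image v).orderIsoOfFin (k := k)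
    (by rw [Finset.card_image_of_injective _ hv]; simp)
  let s : Fin k → Fin k := fun a => e.symm ⟨v a, by simp⟩
  have hs : ∀ a b, s a < s b ↔ v a < v b := fun a b => by simp [s]
  have hinj : Function.Injective s := fun a b h => hv (by simpa [s] using h)
  exact ⟨Equiv.ofBijective s (Finite.injective_iff_bijective.mp hinj), hs⟩

/-- The pattern formed by a set of entries of a permutation. -/
theorem exists_pattern {n : ℕ} (π : Perm n) (S : Finset (Fin n)) :
    ∃ (δ : SizedPerm) (g : Fin δ.1 → Fin n), StrictMono g ∧ Set.range g = S ∧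
      ∀ a b, π (g a) < π (g b) ↔ δ.2 a < δ.2 b := by
  let g := S.orderEmbOfFin rfl
  obtain ⟨σ, hσ⟩ := exists_perm_lt_iff (fun a => π (g a)) (π.injective.comp g.injective)
  exact ⟨⟨_, σ⟩, g, g.strictMono, by simp [g], fun a b => (hσ a b).symm⟩

/-- A set of positions whose elements compare in the same way, both by position and by value,
to every outside entry. -/
def IsModule {n : ℕ} (π : Perm n) (I : Set (Fin n)) : Prop :=
  ∀ p ∉ I, ∀ q ∈ I, ∀ q' ∈ I, (p < q ↔ p < q') ∧ (π p < π q ↔ π p < π q')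

theorem isPermInterval_iff_isModule {n : ℕ} (π : Perm n) (I : Finset (Fin n)) :
    IsPermInterval π I ↔ IsModule π (I : Set (Fin n)) := by
  constructor
  · rintro ⟨h1, h2⟩ p hp q hq q' hq'
    have hp' : π p ∉ I.image π := by simpa using hp
    have hm : ∀ {q}, q ∈ (I : Set (Fin n)) → π q ∈ I.image π := fun h =>
      Finset.mem_image_of_mem π h
    constructor
    · constructor <;> intro h <;> by_contra! h'
      · exact hp (h1 hq' hq h' h.le)
      · exact hp (h1 hq hq' h' h.le)
    · constructor <;> intro h <;> by_contra! h'
      · exact hp' (h2 (hm hq') (hm hq) h' h.le)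
      · exact hp' (h2 (hm hq) (hm hq') h' h.le)
  · intro h
    refine ⟨fun i j l hi hl hij hjl => ?_, fun i j l hi hl hij hjl => ?_⟩
    · by_contra hj
      have h1 := (h j hj i hi l hl).1
      have : j ≠ l := fun h => hj (h ▸ hl)
      exact absurd (h1.mpr (lt_of_le_of_ne hjl this)) hij.not_gt
    · obtain ⟨i, hiI, rfl⟩ := Finset.mem_image.mp hi
      obtain ⟨l, hlI, rfl⟩ := Finset.mem_image.mp hl
      obtain ⟨j, rfl⟩ := π.surjective j
      by_contra hj
      have hj' : j ∉ I := fun h => hj (Finset.mem_image_of_mem π h)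
      have h1 := (h j hj' i hiI l hlI).2
      have : j ≠ l := fun h => hj' (h ▸ hlI)
      exact absurd (h1.mpr (lt_of_le_of_ne hjl (π.injective.ne this))) hij.not_gt

theorem isSimple_iff_isModule {n : ℕ} (π : Perm n) :
    IsSimple π ↔ ∀ I : Set (Fin n), IsModule π I → I.Subsingleton ∨ I = Set.univ := by
  classical
  constructor
  · intro h I hI
    lift I to Finset (Fin n) using I.toFinite
    refine (h I ((isPermInterval_iff_isModule π I).mpr hI)).imp (fun h1 => ?_) fun h1 => ?_
    · exact fun x hx y hy => Finset.card_le_one.mp h1 x hx y hy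
    · rw [(Finset.card_eq_iff_eq_univ I).mp (by simpa using h1), Finset.coe_univ]
  · intro h I hI
    refine (h I ((isPermInterval_iff_isModule π I).mp hI)).imp (fun h1 => ?_) fun h1 => ?_
    · exact Finset.card_le_one.mpr fun x hx y hy => h1 hx hy
    · rw [Finset.coe_eq_univ.mp h1, Finset.card_univ, Fintype.card_fin]

section Module

variable {n : ℕ} {π : Perm n}

theorem IsModule.union {I J : Set (Fin n)} (hI : IsModule π I) (hJ : IsModule π J) {r : Fin n}
    (hrI : r ∈ I) (hrJ : r ∈ J) : IsModule π (I ∪ J) := by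
  have key : ∀ p ∉ I ∪ J, ∀ q ∈ I ∪ J, (p < q ↔ p < r) ∧ (π p < π q ↔ π p < π r) := by
    intro p hp q hq
    rw [Set.mem_union, not_or] at hp
    rcases hq with hq | hq
    · exact hI p hp.1 q hq r hrI
    · exact hJ p hp.2 q hq r hrJ
  intro p hp q hq q' hq'
  have h1 := key p hp q hq
  have h2 := key p hp q' hq'
  exact ⟨h1.1.trans h2.1.symm, h1.2.trans h2.2.symm⟩

theorem IsModule.lt_iff_gt {I : Set (Fin n)} (hI : IsModule π I) {p q q' : Fin n} (hp : p ∉ I)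
    (hq : q ∈ I) (hq' : q' ∈ I) : (q < p ↔ q' < p) ∧ (π q < π p ↔ π q' < π p) := by
  have h := hI p hp q hq q' hq'
  have h1 : p ≠ q := fun h => hp (h ▸ hq)
  have h2 : p ≠ q' := fun h => hp (h ▸ hq')
  have h3 := π.injective.ne h1
  have h4 := π.injective.ne h2
  grind

theorem isModule_singleton (p : Fin n) : IsModule π {p} := by
  rintro r - q rfl q' rfl
  simp

theorem IsModule.eq_univ_of_ends {I : Set (Fin n)} (hI : IsModule π I) {z l : Fin n}
    (hz : ∀ p, z ≤ p) (hl : ∀ p, p ≤ l) (hzI : z ∈ I) (hlI : l ∈ I) : I = Set.univ := by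
  refine Set.eq_univ_of_forall fun p => ?_
  by_contra hp
  have h := (hI p hp z hzI l hlI).1
  have h1 : p ≠ l := fun h => hp (h ▸ hlI)
  exact absurd (h.mpr (lt_of_le_of_ne (hl p) h1)) (hz p).not_gt

/-- `π` is the concatenation of two nonempty parts, the first lying below the second if `u` holds
and above it otherwise. -/
def DecomposableBy {n : ℕ} (u : Prop) (π : Perm n) : Prop :=
  ∃ c : Fin n, 0 < (c : ℕ) ∧ ∀ i j, i < c → c ≤ j → (π i < π j ↔ u)

theorem exists_decomposableBy_of_modules {I J : Set (Fin n)} (hI : IsModule π I)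
    (hJ : IsModule π J) (hcover : I ∪ J = Set.univ) (hI' : I ≠ Set.univ) (hJ' : J ≠ Set.univ)
    {z l : Fin n} (hz : ∀ p, z ≤ p) (hl : ∀ p, p ≤ l) (hzI : z ∈ I) :
    ∃ u, DecomposableBy u π := by
  have hcov : ∀ p, p ∈ I ∨ p ∈ J := fun p => by
    have : p ∈ I ∪ J := hcover ▸ Set.mem_univ p
    exact this
  have hlI : l ∉ I := fun h => hI' (hI.eq_univ_of_ends hz hl hzI h)
  have hlJ : l ∈ J := (hcov l).resolve_left hlI
  have hzJ : z ∉ J := fun h => hJ' (hJ.eq_univ_of_ends hz hl h hlJ)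
  obtain ⟨c, hc, hcmin⟩ := Set.exists_min_image J id J.toFinite ⟨l, hlJ⟩
  refine ⟨π z < π l, c, ?_, fun i j hi hj => ?_⟩
  · have : z ≠ c := fun h => hzJ (h ▸ hc)
    have := lt_of_le_of_ne (hz c) this
    rw [Fin.lt_def] at this
    omega
  · have hiJ : i ∉ J := fun h => absurd (hcmin i h) hi.not_ge
    have hiI : i ∈ I := (hcov i).resolve_right hiJ
    have hjJ : j ∈ J := by
      by_contra hjJ
      have h1 : j ≠ l := fun h => hjJ (h ▸ hlJ)
      exact absurd ((hJ j hjJ c hc l hlJ).1.mpr (lt_of_le_of_ne (hl j) h1)) hj.not_gt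
    rw [(hJ i hiJ j hjJ l hlJ).2, (hI.lt_iff_gt hlI hiI hzI).2]

/-- Two entries are linked if they lie in a common proper module. -/
def Linked {n : ℕ} (π : Perm n) (p q : Fin n) : Prop :=
  ∃ I : Set (Fin n), IsModule π I ∧ I ≠ Set.univ ∧ p ∈ I ∧ q ∈ I

theorem Linked.symm {p q : Fin n} (h : Linked π p q) : Linked π q p := by
  obtain ⟨I, h1, h2, h3, h4⟩ := h
  exact ⟨I, h1, h2, h4, h3⟩

theorem Linked.refl (hn : 2 ≤ n) (p : Fin n) : Linked π p p := by
  refine ⟨{p}, isModule_singleton p, fun h => ?_, rfl, rfl⟩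
  have := congrArg Set.ncard h
  simp at this
  omega

theorem Linked.trans (hπ : ∀ u, ¬ DecomposableBy u π) {p q r : Fin n} (h : Linked π p q)
    (h' : Linked π q r) : Linked π p r := by
  obtain ⟨I, h1, h2, h3, h4⟩ := h
  obtain ⟨J, h1', h2', h3', h4'⟩ := h'
  refine ⟨I ∪ J, h1.union h1' h4 h3', fun hu => ?_, Or.inl h3, Or.inr h4'⟩
  have hz : ∀ x : Fin n, (⟨0, p.pos⟩ : Fin n) ≤ x := fun x => by simp [Fin.le_def]
  have hl : ∀ x : Fin n, x ≤ (⟨n - 1, by have := p.pos; omega⟩ : Fin n) := fun x => by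
    simp [Fin.le_def]; omega
  have hz' : (⟨0, p.pos⟩ : Fin n) ∈ I ∪ J := hu ▸ Set.mem_univ _
  rcases hz' with hzI | hzJ
  · obtain ⟨u, hu'⟩ := exists_decomposableBy_of_modules h1 h1' hu h2 h2' hz hl hzI
    exact hπ u hu'
  · obtain ⟨u, hu'⟩ := exists_decomposableBy_of_modules h1' h1 (by rw [Set.union_comm, hu])
      h2' h2 hz hl hzJ
    exact hπ u hu'

theorem Linked.lt_iff {p p' q : Fin n} (h : Linked π p p') (hq : ¬ Linked π p q) :
    (p < q ↔ p' < q) ∧ (q < p ↔ q < p') ∧ (π p < π q ↔ π p' < π q) := by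
  obtain ⟨I, h1, h2, h3, h4⟩ := h
  have hqI : q ∉ I := fun h => hq ⟨I, h1, h2, h3, h⟩
  have h5 := h1.lt_iff_gt hqI h3 h4
  exact ⟨h5.1, (h1 q hqI p h3 p' h4).1, h5.2⟩

/-- The entries of `π` are partitioned into blocks (by `b`), the blocks having patterns `α` and
being arranged according to `σ`. -/
structure IsPresentation {n m : ℕ} (π : Perm n) (σ : Perm m) (α : Fin m → SizedPerm)
    (b : Fin n → Fin m) : Prop where
  mono : Monotone b
  surj : Function.Surjective b
  lt_iff : ∀ p q, b p ≠ b q → (π p < π q ↔ σ (b p) < σ (b q))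
  pattern : ∀ i, ∃ g : Fin (α i).1 → Fin n, StrictMono g ∧ Set.range g = {p | b p = i} ∧
    ∀ x y, π (g x) < π (g y) ↔ (α i).2 x < (α i).2 y

variable {m : ℕ} {σ : Perm m}

theorem exists_isPresentation {b : Fin n → Fin m} (hb : Monotone b) (hb' : Function.Surjective b)
    (h : ∀ p q, b p ≠ b q → (π p < π q ↔ σ (b p) < σ (b q))) :
    ∃ α, IsPresentation π σ α b := by
  choose α g hg hg' hα using fun i => exists_pattern π (Finset.univ.filter fun p => b p = i)
  exact ⟨α, hb, hb', h, fun i => ⟨g i, hg i, by simp [hg' i], hα i⟩⟩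

variable {α : Fin m → SizedPerm} {b : Fin n → Fin m}

theorem IsPresentation.eq_inflate (h : IsPresentation π σ α b) :
    (⟨n, π⟩ : SizedPerm) = ⟨_, inflate σ α⟩ := by
  choose g hg hg' hα using h.pattern
  have hbg : ∀ i x, b (g i x) = i := fun i x => by
    have : g i x ∈ {p | b p = i} := hg' i ▸ Set.mem_range_self x
    exact this
  refine _root_.eq_inflate g hg (fun i j hij x y => ?_) (fun p => ?_) hα fun i j hij x y => ?_
  · by_contra! hle
    have := h.mono hle
    rw [hbg, hbg] at this
    exact absurd hij this.not_gt
  · have : p ∈ Set.range (g (b p)) := hg' (b p) ▸ rfl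
    exact ⟨_, this⟩
  · rw [h.lt_iff _ _ (by rwa [hbg, hbg]), hbg, hbg]

theorem IsPresentation.block_pos (h : IsPresentation π σ α b) (i : Fin m) : 0 < (α i).1 := by
  obtain ⟨g, -, hg, -⟩ := h.pattern i
  obtain ⟨p, hp⟩ := h.surj i
  have : p ∈ Set.range g := hg ▸ hp
  obtain ⟨x, -⟩ := this
  exact x.pos

theorem isPresentation_inflate (σ : Perm m) (α : Fin m → SizedPerm) (hα : ∀ i, 0 < (α i).1) :
    IsPresentation (inflate σ α) σ α fun p => (finSigmaFinEquiv.symm p).1 := by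
  have hb : ∀ i x, (finSigmaFinEquiv.symm (blockPos α i x)).1 = i := fun i x => by
    have : finSigmaFinEquiv.symm (blockPos α i x) = ⟨i, x⟩ := Equiv.symm_apply_apply _ _
    rw [this]
  refine ⟨fun p q h => ?_, fun i => ⟨_, hb i ⟨0, hα i⟩⟩, fun p q h => ?_, fun i =>
    ⟨blockPos α i, blockPos_strictMono α i, ?_, fun _ _ => inflate_lt_iff_same σ α⟩⟩
  · obtain ⟨i, x, rfl⟩ := exists_eq_blockPos α p
    obtain ⟨j, y, rfl⟩ := exists_eq_blockPos α q
    rw [hb, hb]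
    by_contra! hlt
    exact absurd h ((blockPos_lt_iff α).mpr (Or.inl hlt)).not_ge
  · obtain ⟨i, x, rfl⟩ := exists_eq_blockPos α p
    obtain ⟨j, y, rfl⟩ := exists_eq_blockPos α q
    rw [hb, hb] at h ⊢
    exact inflate_lt_iff_of_ne σ α h
  · ext p
    obtain ⟨j, y, rfl⟩ := exists_eq_blockPos α p
    rw [Set.mem_ofPred_eq, hb]
    constructor
    · rintro ⟨x, hx⟩
      rw [← hb i x, hx, hb]
    · rintro rfl
      exact ⟨y, rfl⟩

theorem IsPresentation.lt_iff_lt (h : IsPresentation π σ α b) {p q : Fin n} (hpq : b p ≠ b q) :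
    p < q ↔ b p < b q := by
  constructor
  · exact fun hlt => lt_of_le_of_ne (h.mono hlt.le) hpq
  · intro hlt
    by_contra! hle
    exact absurd (h.mono hle) hlt.not_ge

theorem IsPresentation.isModule_preimage (h : IsPresentation π σ α b) {I : Set (Fin m)}
    (hI : IsModule σ I) : IsModule π (b ⁻¹' I) := by
  intro p hp q hq q' hq'
  have h1 : ∀ {q}, q ∈ b ⁻¹' I → b p ≠ b q := fun {q} hq h => hp (by
    rw [Set.mem_preimage, h]; exact hq)
  rw [h.lt_iff_lt (h1 hq), h.lt_iff_lt (h1 hq'), h.lt_iff _ _ (h1 hq), h.lt_iff _ _ (h1 hq')]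
  exact hI (b p) hp (b q) hq (b q') hq'

end Module

/-- Some pair of entries of `σ` is increasing. -/
def HasAscent {m : ℕ} (σ : Perm m) : Prop := ∃ s t, s < t ∧ σ s < σ t

/-- The restriction on the blocks which makes decompositions into sums and skew sums unique. -/
def IsReducedInflation {m : ℕ} (σ : Perm m) (α : Fin m → SizedPerm) : Prop :=
  m = 2 → ∀ i : Fin m, (i : ℕ) = 0 → ¬ DecomposableBy (HasAscent σ) (α i).2

theorem hasAscent_iff {m : ℕ} (hm : m = 2) (σ : Perm m) {s t : Fin m} (h : s < t) :
    HasAscent σ ↔ σ s < σ t := by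
  subst hm
  refine ⟨?_, fun h' => ⟨s, t, h, h'⟩⟩
  rintro ⟨s', t', h1, h2⟩
  obtain rfl : s = s' := by omega
  obtain rfl : t = t' := by omega
  exact h2

section Presentation

variable {n m : ℕ} {π : Perm n} {σ : Perm m} {α : Fin m → SizedPerm} {b : Fin n → Fin m}

theorem IsPresentation.decomposableBy (h : IsPresentation π σ α b) (hm : m = 2) :
    DecomposableBy (HasAscent σ) π := by
  obtain ⟨p, hp⟩ := h.surj ⟨1, by omega⟩
  obtain ⟨q, hq⟩ := h.surj ⟨0, by omega⟩
  obtain ⟨c, hc, hcmin⟩ := Set.exists_min_image {p | b p = ⟨1, by omega⟩} id (Set.toFinite _)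
    ⟨p, hp⟩
  have hcb : b c = ⟨1, by omega⟩ := hc
  refine ⟨c, ?_, fun i j hi hj => ?_⟩
  · by_contra h0
    have h1 : c ≤ q := by rw [Fin.le_def]; omega
    have h2 := h.mono h1
    rw [hcb, hq, Fin.le_def] at h2
    simp at h2
  · have h1 : b i ≠ ⟨1, by omega⟩ := fun h => absurd (hcmin i h) hi.not_ge
    have h2 := h.mono hj
    rw [hcb] at h2
    have h3 : b i < b j := by
      rw [Fin.le_def] at h2
      rw [ne_eq, Fin.ext_iff] at h1
      rw [Fin.lt_def]
      dsimp only at h1 h2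
      omega
    rw [h.lt_iff i j h3.ne, hasAscent_iff hm σ h3]

theorem IsSimple.of_length_two (σ : Perm 2) : IsSimple σ := by
  intro I _
  have := Finset.card_le_univ I
  simp only [Fintype.card_fin] at this
  omega

theorem exists_isPresentation_of_decomposableBy {u : Prop} (h : DecomposableBy u π) :
    ∃ (σ : Perm 2) (α : Fin 2 → SizedPerm) (b : Fin n → Fin 2),
      IsPresentation π σ α b ∧ IsReducedInflation σ α := by
  classical
  obtain ⟨c, ⟨hc0, hc⟩, hcmin⟩ := Set.exists_min_image
    {c : Fin n | 0 < (c : ℕ) ∧ ∀ i j, i < c → c ≤ j → (π i < π j ↔ u)} id (Set.toFinite _) h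
  let σ : Perm 2 := if u then 1 else Equiv.swap 0 1
  have hσ : σ 0 < σ 1 ↔ u := by
    by_cases hu : u <;> simp [σ, hu]
  have hσ' : σ 1 < σ 0 ↔ ¬ u := by
    by_cases hu : u <;> simp [σ, hu]
  let b : Fin n → Fin 2 := fun p => if p < c then 0 else 1
  have hb0 : ∀ p, b p = 0 ↔ p < c := fun p => by
    by_cases hp : p < c <;> simp [b, hp]
  have hb1 : ∀ p, b p = 1 ↔ c ≤ p := fun p => by
    by_cases hp : p < c
    · simp [b, hp]
    · simp [b, hp, not_lt.mp hp]
  have hmono : Monotone b := fun p q hpq => by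
    by_cases hp : p < c
    · rw [(hb0 p).mpr hp]; exact Fin.zero_le _
    · rw [(hb1 p).mpr (not_lt.mp hp), (hb1 q).mpr ((not_lt.mp hp).trans hpq)]
  have hsurj : Function.Surjective b := fun i => by
    fin_cases i
    · exact ⟨⟨0, c.pos⟩, (hb0 _).mpr (by rwa [Fin.lt_def])⟩
    · exact ⟨c, (hb1 c).mpr le_rfl⟩
  obtain ⟨α, hα⟩ := exists_isPresentation (σ := σ) (π := π) hmono hsurj fun p q hpq => by
    by_cases hp : p < c <;> by_cases hq : q < c
    · exact absurd (((hb0 p).mpr hp).trans ((hb0 q).mpr hq).symm) hpq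
    · rw [(hb0 p).mpr hp, (hb1 q).mpr (not_lt.mp hq), hσ]
      exact hc p q hp (not_lt.mp hq)
    · rw [(hb0 q).mpr hq, (hb1 p).mpr (not_lt.mp hp), hσ', ← hc q p hq (not_lt.mp hp), not_lt]
      have : π q ≠ π p := fun h => hpq (by rw [π.injective h])
      exact ⟨fun h => h.le, fun h => lt_of_le_of_ne h this.symm⟩
    · exact absurd (((hb1 p).mpr (not_lt.mp hp)).trans ((hb1 q).mpr (not_lt.mp hq)).symm) hpq
  refine ⟨σ, α, b, hα, fun _ i hi => ?_⟩
  obtain rfl : i = 0 := Fin.ext hi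
  rw [hasAscent_iff rfl σ (s := 0) (t := 1) (by decide), hσ]
  rintro ⟨d, hd0, hd⟩
  obtain ⟨g, hg, hg', hgα⟩ := hα.pattern 0
  have hgc : ∀ x, g x < c := fun x => by
    have : g x ∈ {p | b p = 0} := hg' ▸ Set.mem_range_self x
    exact (hb0 _).mp this
  have hsurj : ∀ p, p < c → ∃ x, g x = p := fun p hp => by
    have : p ∈ Set.range g := hg' ▸ (hb0 p).mpr hp
    exact this
  refine absurd (hcmin (g d) ⟨?_, fun i j hi hj => ?_⟩) (hgc d).not_ge
  · have : g ⟨0, d.pos⟩ < g d := hg (by rwa [Fin.lt_def])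
    rw [Fin.lt_def] at this
    omega
  · obtain ⟨x, rfl⟩ := hsurj i (hi.trans (hgc d))
    by_cases hjc : j < c
    · obtain ⟨y, rfl⟩ := hsurj j hjc
      rw [hgα]
      exact hd x y (hg.lt_iff_lt.mp hi) (hg.le_iff_le.mp hj)
    · exact hc _ _ (hgc x) (not_lt.mp hjc)

theorem exists_isPresentation_of_not_decomposableBy (hn : 2 ≤ n)
    (hπ : ∀ u, ¬ DecomposableBy u π) :
    ∃ (m : ℕ) (σ : Perm m) (α : Fin m → SizedPerm) (b : Fin n → Fin m), 2 < m ∧ IsSimple σ ∧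
      IsPresentation π σ α b := by
  classical
  have hex : ∀ p, ∃ r, Linked π p r ∧ ∀ q, Linked π p q → r ≤ q := fun p =>
    Set.exists_min_image {q | Linked π p q} id (Set.toFinite _) ⟨p, Linked.refl hn p⟩
  choose rep hrep hmin using hex
  have hrep_eq : ∀ p q, rep p = rep q ↔ Linked π p q := fun p q => by
    constructor
    · intro h
      exact (hrep p).trans hπ (h ▸ (hrep q).symm)
    · intro h
      exact le_antisymm (hmin p _ (h.trans hπ (hrep q))) (hmin q _ (h.symm.trans hπ (hrep p)))
  have hrep_mono : Monotone rep := fun p q hpq => by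
    by_cases h : Linked π p q
    · exact ((hrep_eq p q).mpr h).le
    · have h1 := ((hrep q).lt_iff (q := p) fun h' => h h'.symm).1
      refine (hmin p p (Linked.refl hn p)).trans ?_
      by_contra! hlt
      exact absurd (h1.mpr hlt) hpq.not_gt
  let M := Finset.univ.image rep
  let e := M.orderIsoOfFin rfl
  let b : Fin n → Fin M.card := fun p => e.symm ⟨rep p, by simp [M]⟩
  have hb : ∀ p q, b p = b q ↔ Linked π p q := fun p q => by
    simp [b, hrep_eq]
  have hmono : Monotone b := fun p q hpq => e.symm.monotone (hrep_mono hpq)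
  have hsurj : Function.Surjective b := fun i => by
    obtain ⟨p, -, hp⟩ := Finset.mem_image.mp (e i).2
    refine ⟨p, ?_⟩
    rw [OrderIso.symm_apply_eq]
    exact Subtype.ext hp
  obtain ⟨σ, hσ⟩ := exists_perm_lt_iff (fun i => π (e i).1) fun i j h =>
    e.injective (Subtype.ext (π.injective h))
  have heb : ∀ p, (e (b p)).1 = rep p := fun p => by simp [b]
  obtain ⟨α, hα⟩ := exists_isPresentation (σ := σ) (π := π) hmono hsurj fun p q hpq => by
    rw [hσ, heb, heb]
    have h : ¬ Linked π p q := fun h => hpq ((hb p q).mpr h)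
    rw [((hrep p).lt_iff h).2.2]
    have h' : ¬ Linked π (rep p) q := fun h' => h ((hrep p).trans hπ h')
    have h1 := ((hrep q).lt_iff fun h => h' h.symm).2.2
    have h2 : π q ≠ π (rep p) := fun h'' => h' (π.injective h'' ▸ Linked.refl hn _)
    have h3 : π (rep q) ≠ π (rep p) := fun h'' => h (by
      rw [← hrep_eq]; exact (π.injective h'').symm)
    grind
  have hm2 : 2 ≤ M.card := by
    have h : b ⟨0, by omega⟩ ≠ b ⟨n - 1, by omega⟩ := fun h => by
      obtain ⟨I, h1, h2, h3, h4⟩ := (hb _ _).mp h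
      refine h2 (h1.eq_univ_of_ends (fun p => ?_) (fun p => ?_) h3 h4)
      · simp [Fin.le_def]
      · simp [Fin.le_def]; omega
    by_contra hlt
    have h1 := (b ⟨0, by omega⟩).2
    have h2 := (b ⟨n - 1, by omega⟩).2
    exact h (Fin.ext (by omega))
  refine ⟨_, σ, α, b, lt_of_le_of_ne hm2 fun h => hπ _ (hα.decomposableBy h.symm),
    (isSimple_iff_isModule σ).mpr fun I hI => ?_, hα⟩
  by_contra! hcon
  obtain ⟨i, hi, j, hj, hij⟩ := Set.not_subsingleton_iff.mp (by simpa using hcon.1)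
  obtain ⟨p, rfl⟩ := hsurj i
  obtain ⟨q, rfl⟩ := hsurj j
  refine hij ((hb p q).mpr ⟨b ⁻¹' I, hα.isModule_preimage hI, fun h => hcon.2 ?_, hi, hj⟩)
  refine Set.eq_univ_of_forall fun i => ?_
  obtain ⟨p, rfl⟩ := hsurj i
  exact Set.eq_univ_iff_forall.mp h p

theorem exists_reduced_presentation (hn : 2 ≤ n) (π : Perm n) :
    ∃ (m : ℕ) (σ : Perm m) (α : Fin m → SizedPerm) (b : Fin n → Fin m), 2 ≤ m ∧ IsSimple σ ∧
      IsPresentation π σ α b ∧ IsReducedInflation σ α := by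
  by_cases h : ∃ u, DecomposableBy u π
  · obtain ⟨u, hu⟩ := h
    obtain ⟨σ, α, b, h1, h2⟩ := exists_isPresentation_of_decomposableBy hu
    exact ⟨2, σ, α, b, le_rfl, IsSimple.of_length_two σ, h1, h2⟩
  · obtain ⟨m, σ, α, b, h1, h2, h3⟩ := exists_isPresentation_of_not_decomposableBy hn
      (not_exists.mp h)
    exact ⟨m, σ, α, b, h1.le, h2, h3, fun h => absurd h h1.ne'⟩

end Presentation

theorem contains_of_range_subset {n k k' : ℕ} {π : Perm n} {δ : Perm k} {δ' : Perm k'}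
    {g : Fin k → Fin n} {g' : Fin k' → Fin n} (hg : StrictMono g) (hg' : StrictMono g')
    (hδ : ∀ x y, π (g x) < π (g y) ↔ δ x < δ y) (hδ' : ∀ x y, π (g' x) < π (g' y) ↔ δ' x < δ' y)
    (h : Set.range g ⊆ Set.range g') : Contains δ δ' := by
  choose f hf using fun x => h (Set.mem_range_self x)
  refine ⟨f, fun x y hxy => hg'.lt_iff_lt.mp ?_, fun x y => ?_⟩
  · rw [hf, hf]; exact hg hxy
  · rw [← hδ', hf, hf, hδ]

theorem pattern_unique {n : ℕ} {π : Perm n} {δ δ' : SizedPerm}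
    {g : Fin δ.1 → Fin n} {g' : Fin δ'.1 → Fin n} (hg : StrictMono g) (hg' : StrictMono g')
    (hδ : ∀ x y, π (g x) < π (g y) ↔ δ.2 x < δ.2 y)
    (hδ' : ∀ x y, π (g' x) < π (g' y) ↔ δ'.2 x < δ'.2 y) (h : Set.range g = Set.range g') :
    δ = δ' :=
  (contains_of_range_subset hg hg' hδ hδ' h.subset).sigma_eq
    (contains_of_range_subset hg' hg hδ' hδ h.symm.subset).length_le

theorem DecomposableBy.iff {n : ℕ} {π : Perm n} {u u' : Prop} (h : DecomposableBy u π)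
    (h' : DecomposableBy u' π) : u ↔ u' := by
  obtain ⟨c, hc0, hc⟩ := h
  obtain ⟨c', hc0', hc'⟩ := h'
  rw [← hc ⟨0, c.pos⟩ ⟨n - 1, by omega⟩ (by simpa [Fin.lt_def] using hc0)
    (by rw [Fin.le_def]; simp only; omega), ← hc' ⟨0, c.pos⟩ ⟨n - 1, by omega⟩
    (by simpa [Fin.lt_def] using hc0') (by rw [Fin.le_def]; simp only; omega)]

section Uniqueness

variable {n m m' : ℕ} {π : Perm n} {σ : Perm m} {α : Fin m → SizedPerm} {b : Fin n → Fin m}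
  {τ : Perm m'} {β : Fin m' → SizedPerm} {b' : Fin n → Fin m'}

theorem IsPresentation.length_le_of_kernel (h : IsPresentation π σ α b)
    (hk : ∀ p q, b p = b q ↔ b' p = b' q) : m ≤ m' := by
  choose s hs using h.surj
  have : Function.Injective (b' ∘ s) := fun i j hij => by
    rw [← hs i, ← hs j, hk]
    exact hij
  simpa using Fintype.card_le_of_injective _ this

theorem IsPresentation.unique_of_kernel (h : IsPresentation π σ α b)
    (h' : IsPresentation π τ β b') (hk : ∀ p q, b p = b q ↔ b' p = b' q) :
    (⟨⟨m, σ⟩, α⟩ : Σ s : SizedPerm, Fin s.1 → SizedPerm) = ⟨⟨m', τ⟩, β⟩ := by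
  obtain rfl : m = m' := le_antisymm (h.length_le_of_kernel hk)
    (h'.length_le_of_kernel fun p q => (hk p q).symm)
  choose s hs using h.surj
  have hm : StrictMono (b' ∘ s) := fun i j hij => by
    have hne : b (s i) ≠ b (s j) := by rw [hs, hs]; exact hij.ne
    refine (h'.lt_iff_lt ((hk _ _).not.mp hne)).mp ((h.lt_iff_lt hne).mpr ?_)
    rwa [hs, hs]
  have hid : b' ∘ s = id := hm.eq_id
  have hbb : b' = b := funext fun p => by
    have h1 : b' p = b' (s (b p)) := (hk _ _).mp (hs (b p)).symm
    rw [h1]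
    exact congrFun hid (b p)
  subst hbb
  obtain rfl : σ = τ := Perm.ext_of_lt_iff fun i j => by
    by_cases hij : i = j
    · subst hij; simp
    · have hne : b' (s i) ≠ b' (s j) := by rwa [hs, hs]
      have h1 := h.lt_iff _ _ hne
      rw [h'.lt_iff _ _ hne, hs, hs] at h1
      exact h1.symm
  obtain rfl : α = β := funext fun i => by
    obtain ⟨g, hg, hgr, hgα⟩ := h.pattern i
    obtain ⟨g', hg', hgr', hgα'⟩ := h'.pattern i
    exact pattern_unique hg hg' hgα hgα' (hgr.trans hgr'.symm)
  rfl

theorem IsPresentation.linked_iff (h : IsPresentation π σ α b) (hσ : IsSimple σ) (hm : 2 < m)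
    {p q : Fin n} : Linked π p q ↔ b p = b q := by
  rw [isSimple_iff_isModule] at hσ
  constructor
  · rintro ⟨I, hI, hIu, hp, hq⟩
    have key : ∀ r ∉ I, ∀ p' ∈ I, ∀ q' ∈ I, b r ≠ b p' → b r ≠ b q' →
        (b r < b p' ↔ b r < b q') ∧ (σ (b r) < σ (b p') ↔ σ (b r) < σ (b q')) := by
      intro r hr p' hp' q' hq' h1 h2
      rw [← h.lt_iff_lt h1, ← h.lt_iff_lt h2, ← h.lt_iff _ _ h1, ← h.lt_iff _ _ h2]
      exact hI r hr p' hp' q' hq'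
    have himg : IsModule σ (b '' I) := by
      rintro k hk _ ⟨p', hp', rfl⟩ _ ⟨q', hq', rfl⟩
      obtain ⟨r, rfl⟩ := h.surj k
      have hne : ∀ p' ∈ I, b r ≠ b p' := fun p' hp' h => hk (h ▸ Set.mem_image_of_mem b hp')
      exact key r (fun h => hk (Set.mem_image_of_mem b h)) p' hp' q' hq' (hne p' hp') (hne q' hq')
    rcases hσ _ himg with h1 | h1
    · exact h1 (Set.mem_image_of_mem b hp) (Set.mem_image_of_mem b hq)
    · obtain ⟨r, hr⟩ := (Set.ne_univ_iff_exists_notMem I).mp hIu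
      have hmod : IsModule σ {i | i ≠ b r} := by
        intro k hk i hi j hj
        have hk' : k = b r := by simpa using hk
        subst hk'
        obtain ⟨p', hp', rfl⟩ : i ∈ b '' I := h1 ▸ Set.mem_univ i
        obtain ⟨q', hq', rfl⟩ : j ∈ b '' I := h1 ▸ Set.mem_univ j
        exact key r hr p' hp' q' hq' (Ne.symm hi) (Ne.symm hj)
      rcases hσ _ hmod with h2 | h2
      · have : ∃ i j : Fin m, i ≠ j ∧ i ≠ b r ∧ j ≠ b r := by
          have := (b r).2
          simp only [ne_eq, Fin.ext_iff]
          by_cases h0 : (b r : ℕ) = 0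
          · exact ⟨⟨1, by omega⟩, ⟨2, by omega⟩, by simp, by simp; omega, by simp; omega⟩
          · by_cases h0 : (b r : ℕ) = 1
            · exact ⟨⟨0, by omega⟩, ⟨2, by omega⟩, by simp, by simp; omega, by simp; omega⟩
            · exact ⟨⟨0, by omega⟩, ⟨1, by omega⟩, by simp, by simp; omega, by simp; omega⟩
        obtain ⟨i, j, hij, hi, hj⟩ := this
        exact absurd (h2 hi hj) hij
      · exact absurd rfl (Set.eq_univ_iff_forall.mp h2 (b r))
  · intro hpq
    refine ⟨b ⁻¹' {b p}, h.isModule_preimage (isModule_singleton _), fun hu => ?_, rfl, hpq.symm⟩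
    have hall : ∀ i, i = b p := fun i => by
      obtain ⟨r, rfl⟩ := h.surj i
      exact Set.eq_univ_iff_forall.mp hu r
    have := (hall ⟨0, by omega⟩).trans (hall ⟨1, by omega⟩).symm
    simp at this

theorem IsPresentation.length_eq_two (h : IsPresentation π σ α b) (hσ : IsSimple σ) (hm : 2 ≤ m)
    {u : Prop} (hu : DecomposableBy u π) : m = 2 := by
  by_contra hm2
  have hm3 : 2 < m := by omega
  obtain ⟨c, hc0, hc⟩ := hu
  have hI : IsModule π {p | p < c} := by
    intro p hp q hq q' hq'
    have hp' : c ≤ p := not_lt.mp hp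
    have hq1 : q < c := hq
    have hq2 : q' < c := hq'
    have h1 := hc q p hq hp'
    have h2 := hc q' p hq' hp'
    have h3 := π.injective.ne (hq1.trans_le hp').ne
    have h4 := π.injective.ne (hq2.trans_le hp').ne
    refine ⟨⟨fun h => absurd (h.trans hq1) hp'.not_gt,
      fun h => absurd (h.trans hq2) hp'.not_gt⟩, ?_⟩
    grind
  have hJ : IsModule π {p | c ≤ p} := by
    intro p hp q hq q' hq'
    have hp' : p < c := not_le.mp hp
    have h1 := hc p q hp' hq
    have h2 := hc p q' hp' hq'
    exact ⟨⟨fun _ => hp'.trans_le hq', fun _ => hp'.trans_le hq⟩, h1.trans h2.symm⟩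
  have hI' : ∀ p < c, b p = b ⟨0, c.pos⟩ := fun p hp => (h.linked_iff hσ hm3).mp
    ⟨_, hI, fun hu => absurd (Set.eq_univ_iff_forall.mp hu c) (lt_irrefl c), hp, by
      rw [Set.mem_ofPred_eq, Fin.lt_def]
      exact hc0⟩
  have hJ' : ∀ p, c ≤ p → b p = b c := fun p hp => (h.linked_iff hσ hm3).mp
    ⟨_, hJ, fun hu => by
      have : c ≤ ⟨0, c.pos⟩ := Set.eq_univ_iff_forall.mp hu ⟨0, c.pos⟩
      rw [Fin.le_def] at this
      simp only at this
      omega, hp, le_refl c⟩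
  have hall : ∀ i, i = b ⟨0, c.pos⟩ ∨ i = b c := fun i => by
    obtain ⟨p, rfl⟩ := h.surj i
    rcases lt_or_ge p c with hp | hp
    · exact Or.inl (hI' p hp)
    · exact Or.inr (hJ' p hp)
  have h0 := hall ⟨0, by omega⟩
  have h1 := hall ⟨1, by omega⟩
  have h2 := hall ⟨2, by omega⟩
  simp only [Fin.ext_iff] at h0 h1 h2
  omega

theorem IsPresentation.decomposableBy_iff (h : IsPresentation π σ α b) (hσ : IsSimple σ)
    (hm : 2 ≤ m) {u : Prop} : DecomposableBy u π ↔ m = 2 ∧ (u ↔ HasAscent σ) := by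
  constructor
  · intro hu
    have h2 := h.length_eq_two hσ hm hu
    exact ⟨h2, hu.iff (h.decomposableBy h2)⟩
  · rintro ⟨h2, hu⟩
    rw [hu]
    exact h.decomposableBy h2

theorem IsPresentation.first_block_subset (h : IsPresentation π σ α b)
    (h' : IsPresentation π τ β b') (hm : m = 2) (hm' : m' = 2) (hα : IsReducedInflation σ α)
    {p : Fin n} (hp : (b p : ℕ) = 0) : (b' p : ℕ) = 0 := by
  subst hm hm'
  by_contra hp'
  have hstart : ∀ {σ : Perm 2} {α : Fin 2 → SizedPerm} {b : Fin n → Fin 2},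
      IsPresentation π σ α b → b ⟨0, p.pos⟩ = 0 := fun {σ α b} h => by
    obtain ⟨q, hq⟩ := h.surj 0
    have : b ⟨0, p.pos⟩ ≤ b q := h.mono (by simp [Fin.le_def])
    rw [hq] at this
    exact le_antisymm this (Fin.zero_le _)
  refine hα rfl 0 rfl ?_
  rw [(h.decomposableBy rfl).iff (h'.decomposableBy rfl)]
  obtain ⟨g, hg, hgr, hgα⟩ := h.pattern 0
  have hsurj : ∀ q, b q = 0 → ∃ x, g x = q := fun q hq => by
    have : q ∈ Set.range g := hgr ▸ hq
    exact this
  obtain ⟨x, hx⟩ := hsurj p (Fin.ext hp)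
  obtain ⟨a, ha, hamin⟩ := Set.exists_min_image {x | b' (g x) ≠ 0} id (Set.toFinite _)
    ⟨x, fun h => hp' (by rw [← hx, h]; rfl)⟩
  refine ⟨a, ?_, fun i j hi hj => ?_⟩
  · by_contra h0
    obtain ⟨y, hy⟩ := hsurj _ (hstart h)
    have hay : a ≤ y := by rw [Fin.le_def]; omega
    have h1 := h'.mono (hg.monotone hay)
    rw [hy, hstart h'] at h1
    exact ha (le_antisymm h1 (Fin.zero_le _))
  · have hi0 : b' (g i) = 0 := by
      by_contra hne
      exact absurd (hamin i hne) hi.not_ge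
    have hlt : b' (g i) < b' (g j) := by
      rw [hi0]
      exact (Fin.pos_of_ne_zero ha).trans_le (h'.mono (hg.monotone hj))
    rw [← hgα, h'.lt_iff _ _ hlt.ne, hasAscent_iff rfl τ hlt]

theorem IsPresentation.unique (h : IsPresentation π σ α b) (h' : IsPresentation π τ β b')
    (hσ : IsSimple σ) (hτ : IsSimple τ) (hm : 2 ≤ m) (hm' : 2 ≤ m')
    (hα : IsReducedInflation σ α) (hβ : IsReducedInflation τ β) :
    (⟨⟨m, σ⟩, α⟩ : Σ s : SizedPerm, Fin s.1 → SizedPerm) = ⟨⟨m', τ⟩, β⟩ := by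
  refine h.unique_of_kernel h' fun p q => ?_
  by_cases hm2 : m = 2
  · have hm2' : m' = 2 := h'.length_eq_two hτ hm' (h.decomposableBy hm2)
    have key : ∀ p, (b p : ℕ) = 0 ↔ (b' p : ℕ) = 0 := fun p =>
      ⟨h.first_block_subset h' hm2 hm2' hα, h'.first_block_subset h hm2' hm2 hβ⟩
    have h1 := key p
    have h2 := key q
    have := (b p).2
    have := (b q).2
    have := (b' p).2
    have := (b' q).2
    rw [Fin.ext_iff, Fin.ext_iff]
    omega
  · have hm2' : m' ≠ 2 := fun h2 => hm2 (h.length_eq_two hσ hm (h'.decomposableBy h2))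
    rw [← h.linked_iff hσ (by omega), ← h'.linked_iff hτ (by omega)]

theorem exists_isPresentation_of_eq_inflate (hα : ∀ i, 0 < (α i).1)
    (h : (⟨n, π⟩ : SizedPerm) = ⟨_, inflate σ α⟩) : ∃ b, IsPresentation π σ α b := by
  cases h
  exact ⟨_, isPresentation_inflate σ α hα⟩

theorem inflate_unique (h : (⟨_, inflate σ α⟩ : SizedPerm) = ⟨_, inflate τ β⟩)
    (hα : ∀ i, 0 < (α i).1) (hβ : ∀ i, 0 < (β i).1) (hσ : IsSimple σ) (hτ : IsSimple τ)
    (hm : 2 ≤ m) (hm' : 2 ≤ m') (hα' : IsReducedInflation σ α) (hβ' : IsReducedInflation τ β) :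
    (⟨⟨m, σ⟩, α⟩ : Σ s : SizedPerm, Fin s.1 → SizedPerm) = ⟨⟨m', τ⟩, β⟩ := by
  obtain ⟨b, hb⟩ := exists_isPresentation_of_eq_inflate hβ h
  exact (isPresentation_inflate σ α hα).unique hb hσ hτ hm hm' hα' hβ'

end Uniqueness

/-- Every pattern of `σ[α]` which only uses patterns of the `α i` that also occur in the `β i`
occurs in `σ[β]`. -/
theorem Contains.inflate_of_blocks {k m : ℕ} {γ : Perm k} {σ : Perm m} {α β : Fin m → SizedPerm}
    (h : Contains γ (inflate σ α))
    (H : ∀ i, ∀ δ : SizedPerm, δ.1 ≤ k → Contains δ.2 (α i).2 → Contains δ.2 (β i).2) :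
    Contains γ (inflate σ β) := by
  obtain ⟨f, hf, hfγ⟩ := h
  choose b x hb using fun p => exists_eq_blockPos α (f p)
  choose δ g hg hgr hgδ using fun i => exists_pattern γ (Finset.univ.filter fun p => b p = i)
  have hbg : ∀ i a, b (g i a) = i := fun i a => by
    have : g i a ∈ Set.range (g i) := Set.mem_range_self a
    rw [hgr i] at this
    simpa using this
  have hsurj : ∀ p, ∃ a, g (b p) a = p := fun p => by
    have : p ∈ Set.range (g (b p)) := by rw [hgr]; simp
    exact this
  have hδ : ∀ i, Contains (δ i).2 (β i).2 := fun i => by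
    refine H i (δ i) (by simpa using Fintype.card_le_of_injective _ (hg i).injective) ?_
    refine contains_of_range_subset (π := inflate σ α) (hf.comp (hg i)) (blockPos_strictMono α i)
      (fun y z => ?_) (fun _ _ => inflate_lt_iff_same σ α) ?_
    · rw [← hgδ, ← hfγ]; rfl
    · rintro _ ⟨a, rfl⟩
      have h1 := hbg i a
      have h2 := hb (g i a)
      simp only [Function.comp_apply, h2]
      have : ∀ j c, j = i → blockPos α j c ∈ Set.range (blockPos α i) := by
        rintro j c rfl
        exact Set.mem_range_self c
      exact this _ _ h1
  choose e he heδ using hδ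
  choose y hy using hsurj
  let f' : Fin k → Fin (∑ i, (β i).1) := fun p => blockPos β (b p) (e (b p) (y p))
  have hf' : ∀ i a, f' (g i a) = blockPos β i (e i a) := fun i a => by
    have : ∀ j c, j = i → g j c = g i a → blockPos β j (e j c) = blockPos β i (e i a) := by
      rintro j c rfl h
      rw [(hg j).injective h]
    exact this _ _ (hbg i a) (hy (g i a))
  have hlt : ∀ i j, i ≠ j → ∀ a c, (g i a < g j c ↔ i < j) ∧ (γ (g i a) < γ (g j c) ↔
      σ i < σ j) := fun i j hij a c => by
    have hne : b (g i a) ≠ b (g j c) := by rwa [hbg, hbg]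
    rw [← hf.lt_iff_lt, ← hfγ, hb, hb, blockPos_lt_iff_of_ne α hne,
      inflate_lt_iff_of_ne σ α hne, hbg, hbg]
    exact ⟨Iff.rfl, Iff.rfl⟩
  have hex : ∀ p, ∃ i a, p = g i a := fun p => ⟨_, _, (hy p).symm⟩
  refine ⟨f', fun p q hpq => ?_, fun p q => ?_⟩
  · obtain ⟨i, a, rfl⟩ := hex p
    obtain ⟨j, c, rfl⟩ := hex q
    rw [hf', hf']
    by_cases hij : i = j
    · subst hij
      exact blockPos_strictMono β i (he i ((hg i).lt_iff_lt.mp hpq))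
    · rwa [blockPos_lt_iff_of_ne β hij, ← (hlt i j hij a c).1]
  · obtain ⟨i, a, rfl⟩ := hex p
    obtain ⟨j, c, rfl⟩ := hex q
    rw [hf', hf']
    by_cases hij : i = j
    · subst hij
      rw [inflate_lt_iff_same, heδ, hgδ]
    · rw [inflate_lt_iff_of_ne σ β hij, (hlt i j hij a c).2]

theorem inflate_contains_inflate {m : ℕ} (σ : Perm m) {α β : Fin m → SizedPerm}
    (h : ∀ i, Contains (α i).2 (β i).2) : Contains (inflate σ α) (inflate σ β) :=
  (Contains.refl _).inflate_of_blocks fun i _ _ hδ => hδ.trans (h i)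

theorem block_length_lt {m : ℕ} {α : Fin m → SizedPerm} (hm : 2 ≤ m) (hα : ∀ i, 0 < (α i).1)
    (i : Fin m) : (α i).1 < ∑ i, (α i).1 := by
  obtain ⟨j, hj⟩ : ∃ j : Fin m, j ≠ i := by
    have : Nontrivial (Fin m) := Fin.nontrivial_iff_two_le.mpr hm
    exact exists_ne i
  calc (α i).1 < (α i).1 + (α j).1 := Nat.lt_add_of_pos_right (hα j)
    _ = ∑ k ∈ {i, j}, (α k).1 := (Finset.sum_pair (f := fun k => (α k).1) hj.symm).symm
    _ ≤ _ := Finset.sum_le_sum_of_subset (Finset.subset_univ _)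

/-- The permutations obtained from the one-point permutation by repeated reduced inflations of
members of `S`. -/
inductive InflationClosure (S : Set SizedPerm) : SizedPerm → Prop
  | one (π : Perm 1) : InflationClosure S ⟨1, π⟩
  | inflate (s : SizedPerm) (hs : s ∈ S) (α : Fin s.1 → SizedPerm)
      (hα : ∀ i, InflationClosure S (α i)) (hr : IsReducedInflation s.2 α) :
      InflationClosure S ⟨_, inflate s.2 α⟩

section InflationClosure

variable {S : Set SizedPerm}

theorem InflationClosure.length_pos (hS : ∀ s ∈ S, 2 ≤ s.1) {π : SizedPerm}
    (h : InflationClosure S π) : 0 < π.1 := by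
  induction h with
  | one π => exact one_pos
  | inflate s hs α hα hr ih =>
    have := hS s hs
    exact (Nat.zero_le _).trans_lt (block_length_lt this ih ⟨0, by omega⟩)

theorem inflationClosure_of_mem {C : ∀ n, Set (Perm n)} (hC : IsPermClass C)
    (hS : ∀ s : SizedPerm, 2 ≤ s.1 → s.2 ∈ C s.1 → IsSimple s.2 → s ∈ S) :
    ∀ (n : ℕ) (π : Perm n), 0 < n → π ∈ C n → InflationClosure S ⟨n, π⟩ := by
  intro n
  induction n using Nat.strong_induction_on with
  | _ n ih =>
    intro π hn hπ
    rcases Nat.lt_or_ge n 2 with h2 | h2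
    · obtain rfl : n = 1 := by omega
      exact .one π
    · obtain ⟨m, σ, α, b, hm, hσ, hα, hr⟩ := exists_reduced_presentation h2 π
      have hpos := hα.block_pos
      have heq := hα.eq_inflate
      have hlen := congrArg Sigma.fst heq
      dsimp only at hlen
      have hmem : inflate σ α ∈ C _ := by
        have : ∀ x y : SizedPerm, x = y → x.2 ∈ C x.1 → y.2 ∈ C y.1 := by
          rintro x _ rfl h
          exact h
        exact this _ _ heq hπ
      rw [heq]
      refine .inflate ⟨m, σ⟩ (hS _ hm (hC _ _ hmem (inflate_contains_quotient σ α hpos)) hσ) α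
        (fun i => ih _ ?_ _ (hpos i) (hC _ _ hmem (inflate_contains_block σ α i))) hr
      rw [hlen]
      exact block_length_lt hm hpos i

/-- Containment as a relation on permutations of any length. -/
def SizedContains (a b : SizedPerm) : Prop := Contains a.2 b.2

instance : IsPreorder SizedPerm SizedContains where
  refl a := Contains.refl a.2
  trans _ _ _ h h' := Contains.trans h h'

theorem partiallyWellOrderedOn_inflationClosure (hfin : S.Finite) (hS : ∀ s ∈ S, 2 ≤ s.1) :
    {π | InflationClosure S π}.PartiallyWellOrderedOn SizedContains := by
  rw [Set.PartiallyWellOrderedOn.iff_not_exists_isMinBadSeq Sigma.fst]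
  rintro ⟨f, hbad, hmin⟩
  have hdec : ∀ n, ∃ s ∈ S, ∃ α : Fin s.1 → SizedPerm, (∀ i, InflationClosure S (α i)) ∧
      f n = ⟨_, inflate s.2 α⟩ := fun n => by
    have h0 := hbad.1 n
    have h1 := hbad.1 (n + 1)
    have h2 := hbad.2 n (n + 1) n.lt_succ_self
    generalize f n = x at h0 h2
    cases h0 with
    | one π =>
      refine absurd ⟨fun _ => ⟨0, InflationClosure.length_pos hS h1⟩, fun i j hij => ?_,
        fun i j => ?_⟩ h2
      · exact absurd hij (by simp [Subsingleton.elim i j])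
      · simp [Subsingleton.elim i j]
    | inflate s hs α hα hr => exact ⟨s, hs, α, hα, rfl⟩
  choose s hs α hα hf using hdec
  have hblock : ∀ n i, SizedContains (α n i) (f n) := fun n i => by
    rw [hf]
    exact inflate_contains_block _ _ i
  have hrank : ∀ n i, (α n i).1 < (f n).1 := fun n i => by
    rw [hf]
    exact block_length_lt (hS _ (hs n)) (fun i => (hα n i).length_pos hS) i
  have hT : {x | ∃ n i, α n i = x}.PartiallyWellOrderedOn SizedContains := by
    rw [Set.partiallyWellOrderedOn_iff_exists_lt]
    intro g hg
    by_contra! hgbad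
    choose k j hkj using hg
    obtain ⟨i₀, hi₀⟩ : ∃ i₀, ∀ i, k i₀ ≤ k i := by
      obtain ⟨i₀, h⟩ := Nat.sInf_mem (Set.range_nonempty k)
      exact ⟨i₀, fun i => h ▸ Nat.sInf_le (Set.mem_range_self i)⟩
    refine hmin (k i₀) (fun n => if n < k i₀ then f n else g (i₀ + (n - k i₀)))
      (fun n hn => (if_pos hn).symm) ?_ ⟨fun n => ?_, fun n n' hnn' => ?_⟩
    · simp only [lt_irrefl, if_false, Nat.sub_self, add_zero]
      rw [← hkj]
      exact hrank _ _
    · by_cases hn : n < k i₀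
      · simpa only [hn, if_true] using hbad.1 n
      · simp only [hn, if_false]
        rw [← hkj]
        exact hα _ _
    · by_cases hn' : n' < k i₀
      · simpa only [hn', hnn'.trans hn', if_true] using hbad.2 n n' hnn'
      · by_cases hn : n < k i₀
        · simp only [hn', hn, if_true, if_false]
          intro h
          have h1 := hblock (k (i₀ + (n' - k i₀))) (j (i₀ + (n' - k i₀)))
          rw [hkj] at h1
          exact hbad.2 _ _ (hn.trans_le (hi₀ _)) (Contains.trans h h1)
        · simp only [hn', hn, if_false]
          exact hgbad _ _ (by omega)
  have hU : ∀ s : SizedPerm, ((fun α : Fin s.1 → SizedPerm => (⟨_, inflate s.2 α⟩ : SizedPerm)) ''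
      Set.univ.pi fun _ => {x | ∃ n i, α n i = x}).PartiallyWellOrderedOn SizedContains := fun s =>
    (Set.PartiallyWellOrderedOn.pi fun _ => hT).image_of_monotone_on fun a _ b _ hab =>
      inflate_contains_inflate s.2 hab
  lift S to Finset SizedPerm using hfin
  obtain ⟨n, n', hnn', h⟩ := ((Finset.partiallyWellOrderedOn_bUnion S).mpr fun s _ =>
    hU s).exists_lt (f := f) fun n => by
      simp only [Set.mem_iUnion]
      exact ⟨s n, hs n, α n, fun i _ => ⟨n, i, rfl⟩, (hf n).symm⟩
  exact hbad.2 n n' hnn' h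

/-- Membership in a permutation class is decided by the patterns of bounded length. -/
theorem exists_pattern_bound (hfin : S.Finite) (hS : ∀ s ∈ S, 2 ≤ s.1) {C : ∀ n, Set (Perm n)}
    (hC : IsPermClass C) : ∃ N, ∀ π : SizedPerm, InflationClosure S π →
      (π.2 ∈ C π.1 ↔ ∀ γ : SizedPerm, γ.1 ≤ N → Contains γ.2 π.2 → γ.2 ∈ C γ.1) := by
  let B : Set SizedPerm := {b | InflationClosure S b ∧ b.2 ∉ C b.1 ∧
    ∀ b' : SizedPerm, InflationClosure S b' → b'.2 ∉ C b'.1 → Contains b'.2 b.2 → b' = b}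
  have hB : B.Finite := by
    refine IsAntichain.finite_of_partiallyWellOrderedOn (r := SizedContains) ?_
      ((partiallyWellOrderedOn_inflationClosure hfin hS).mono fun b hb => hb.1)
    exact fun b hb b' hb' hne h => hne (hb'.2.2 b hb.1 hb.2.1 h)
  obtain ⟨N, hN⟩ := (hB.image Sigma.fst).bddAbove
  refine ⟨N, fun π hπ => ⟨fun h γ _ hγ => hC _ _ h hγ, fun h => ?_⟩⟩
  by_contra hπC
  have hex : ∃ l, ∃ b : SizedPerm, InflationClosure S b ∧ b.2 ∉ C b.1 ∧ Contains b.2 π.2 ∧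
      b.1 = l := ⟨_, π, hπ, hπC, Contains.refl _, rfl⟩
  classical
  obtain ⟨b, hb, hbC, hbπ, hbl⟩ := Nat.find_spec hex
  refine hbC (h b (hN ⟨b, ⟨hb, hbC, fun b' hb' hbC' hbb' => ?_⟩, rfl⟩) hbπ)
  exact hbb'.sigma_eq (hbl ▸ Nat.find_min' hex ⟨b', hb', hbC', hbb'.trans hbπ, rfl⟩)

end InflationClosure

/-- Whether the entry at position `i` is followed by a smaller one, the last entry being treated as
prescribed by `d`. -/
def DescentAt {n : ℕ} (d : Prop) (π : Perm n) (i : Fin n) : Prop :=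
  if h : (i : ℕ) + 1 < n then π ⟨(i : ℕ) + 1, h⟩ < π i else d

/-- The condition that the descent pattern of `π` matches the parities of its values shifted
by `e`. -/
def ParityDescents {n : ℕ} (e : ZMod 2) (d : Prop) (π : Perm n) : Prop :=
  ∀ i : Fin n, ((π i : ℕ) : ZMod 2) + 1 + e = 0 ↔ DescentAt d π i

theorem dumont_iff_parityDescents {n : ℕ} (π : Perm n) :
    Dumont π ↔ ParityDescents 0 False π := by
  refine forall_congr' fun i => ?_
  have h0 : ((π i : ℕ) : ZMod 2) + 1 + 0 = 0 ↔ Even ((π i : ℕ) + 1) := by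
    rw [← ZMod.natCast_eq_zero_iff_even]
    push_cast
    simp
  rw [h0, DescentAt, ← Nat.not_even_iff_odd]
  by_cases hi : (i : ℕ) + 1 < n
  · have hne : π ⟨(i : ℕ) + 1, hi⟩ ≠ π i := π.injective.ne (by simp [Fin.ext_iff])
    simp only [hi, dif_pos, exists_true_left]
    have h1 : (i : ℕ) + 1 ≠ n := hi.ne
    constructor
    · rintro ⟨h2, h3⟩
      refine ⟨h2, fun h => ?_⟩
      by_contra h4
      exact ((h3 h4).resolve_left h1).not_gt h
    · intro h
      exact ⟨h.mp, fun h2 => Or.inr (lt_of_le_of_ne (not_lt.mp fun h3 => h2 (h.mpr h3)) hne.symm)⟩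
  · have h1 : (i : ℕ) + 1 = n := by omega
    simp [h1]

theorem descentAt_inflate {m : ℕ} (σ : Perm m) (α : Fin m → SizedPerm) (hα : ∀ i, 0 < (α i).1)
    (d : Prop) (i : Fin m) (a : Fin (α i).1) :
    DescentAt d (inflate σ α) (blockPos α i a) ↔ DescentAt (DescentAt d σ i) (α i).2 a := by
  have hsum : ∑ k ∈ Finset.Iio i, (α k).1 + (α i).1 = ∑ k ∈ Finset.Iic i, (α k).1 := by
    rw [← Finset.Iio_insert, Finset.sum_insert (by simp), add_comm]
  unfold DescentAt
  by_cases ha : (a : ℕ) + 1 < (α i).1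
  · have hnext : (blockPos α i a : ℕ) + 1 = blockPos α i ⟨a + 1, ha⟩ := by
      rw [blockPos_val, blockPos_val, add_assoc]
    have hlt : (blockPos α i a : ℕ) + 1 < ∑ i, (α i).1 := hnext ▸ Fin.is_lt _
    rw [dif_pos hlt, dif_pos ha, ← inflate_lt_iff_same σ α]
    simp only [hnext, Fin.eta]
  · rw [dif_neg ha]
    have ha' : (a : ℕ) + 1 = (α i).1 := by omega
    by_cases hi : (i : ℕ) + 1 < m
    · have hnext : (blockPos α i a : ℕ) + 1 = blockPos α ⟨i + 1, hi⟩ ⟨0, hα _⟩ := by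
        rw [blockPos_val, blockPos_val, add_assoc, ha', hsum, add_zero]
        congr 1
        ext k
        simp only [Finset.mem_Iic, Finset.mem_Iio, Fin.le_def, Fin.lt_def]
        omega
      have hlt : (blockPos α i a : ℕ) + 1 < ∑ i, (α i).1 := hnext ▸ Fin.is_lt _
      rw [dif_pos hlt, dif_pos hi]
      simp only [hnext, Fin.eta]
      exact inflate_lt_iff_of_ne σ α (by simp [Fin.ext_iff])
    · have hlt : ¬ (blockPos α i a : ℕ) + 1 < ∑ i, (α i).1 := by
        have : Finset.Iic i = Finset.univ := by
          ext k
          simp only [Finset.mem_Iic, Finset.mem_univ, Fin.le_def, iff_true]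
          omega
        rw [blockPos_val, add_assoc, ha', hsum, this]
        exact lt_irrefl _
      rw [dif_neg hlt, dif_neg hi]

theorem parityDescents_inflate {m : ℕ} (σ : Perm m) (α : Fin m → SizedPerm)
    (hα : ∀ i, 0 < (α i).1) (e : ZMod 2) (d : Prop) :
    ParityDescents e d (inflate σ α) ↔ ∀ i,
      ParityDescents (∑ k ∈ Finset.Iio (σ i), ((α (σ.symm k)).1 : ZMod 2) + e)
        (DescentAt d σ i) (α i).2 := by
  have key : ∀ i a, ((inflate σ α (blockPos α i a) : ℕ) : ZMod 2) + 1 + e =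
      (((α i).2 a : ℕ) : ZMod 2) + 1 +
        (∑ k ∈ Finset.Iio (σ i), ((α (σ.symm k)).1 : ZMod 2) + e) := fun i a => by
    rw [inflate_blockPos_val]
    push_cast
    ring
  constructor
  · intro h i a
    rw [← descentAt_inflate σ α hα, ← key]
    exact h _
  · intro h p
    obtain ⟨i, a, rfl⟩ := exists_eq_blockPos α p
    rw [descentAt_inflate σ α hα, key]
    exact h i a

/-- The finite amount of information about a permutation which is tracked by the enumeration. -/
abbrev PermState (N : ℕ) : Type :=
  Set (Σ k : Fin (N + 1), Perm k) × ZMod 2 × (ZMod 2 → Prop → Prop) × (Prop → Prop)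

/-- The state of a permutation: its patterns of length at most `N`, the parity of its length, its
shifted parity-descent conditions, and its decomposability. -/
def permState (N : ℕ) (π : SizedPerm) : PermState N :=
  ({γ | Contains γ.2 π.2}, π.1, fun e d => ParityDescents e d π.2, fun u => DecomposableBy u π.2)

section State

variable {N : ℕ}

theorem contains_iff_of_permState_eq {π π' : SizedPerm} (h : permState N π = permState N π')
    {γ : SizedPerm} (hγ : γ.1 ≤ N) : Contains γ.2 π.2 ↔ Contains γ.2 π'.2 := by
  have h1 := congrArg (fun x => (⟨⟨γ.1, Nat.lt_succ_of_le hγ⟩, γ.2⟩ :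
    Σ k : Fin (N + 1), Perm k) ∈ x.1) h
  exact iff_of_eq h1

theorem decomposableBy_iff_of_permState_eq {π π' : SizedPerm}
    (h : permState N π = permState N π') {u : Prop} :
    DecomposableBy u π.2 ↔ DecomposableBy u π'.2 :=
  iff_of_eq (congrArg (fun x => x.2.2.2 u) h)

theorem parityDescents_iff_of_permState_eq {π π' : SizedPerm}
    (h : permState N π = permState N π') {e : ZMod 2} {d : Prop} :
    ParityDescents e d π.2 ↔ ParityDescents e d π'.2 :=
  iff_of_eq (congrArg (fun x => x.2.2.1 e d) h)

theorem isReducedInflation_of_permState_eq {m : ℕ} {σ : Perm m} {α β : Fin m → SizedPerm}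
    (h : ∀ i, permState N (α i) = permState N (β i)) (hα : IsReducedInflation σ α) :
    IsReducedInflation σ β := fun hm i hi hd =>
  hα hm i hi ((decomposableBy_iff_of_permState_eq (h i)).mpr hd)

theorem permState_inflate_congr {m : ℕ} {σ : Perm m} {α β : Fin m → SizedPerm} (hm : 2 ≤ m)
    (hσ : IsSimple σ) (hα : ∀ i, 0 < (α i).1) (hβ : ∀ i, 0 < (β i).1)
    (h : ∀ i, permState N (α i) = permState N (β i)) :
    permState N ⟨_, inflate σ α⟩ = permState N ⟨_, inflate σ β⟩ := by
  have hlen : ∀ i, ((α i).1 : ZMod 2) = (β i).1 := fun i => congrArg (fun x => x.2.1) (h i)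
  refine Prod.ext (Set.ext fun γ => ?_) (Prod.ext ?_ (Prod.ext (funext₂ fun e d => ?_)
    (funext fun u => ?_)))
  · have hN : (γ.1 : ℕ) ≤ N := Nat.le_of_lt_succ γ.1.2
    exact ⟨fun hγ => Contains.inflate_of_blocks hγ fun i δ hδ => (contains_iff_of_permState_eq
        (h i) (hδ.trans hN)).mp, fun hγ => Contains.inflate_of_blocks hγ fun i δ hδ =>
        (contains_iff_of_permState_eq (h i) (hδ.trans hN)).mpr⟩
  · simp only [permState, Nat.cast_sum, hlen]
  · simp only [permState, parityDescents_inflate _ _ hα, parityDescents_inflate _ _ hβ, hlen,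
      fun i e d => parityDescents_iff_of_permState_eq (e := e) (d := d) (h i)]
  · simp only [permState, (isPresentation_inflate σ α hα).decomposableBy_iff hσ hm,
      (isPresentation_inflate σ β hβ).decomposableBy_iff hσ hm]

end State

theorem finite_length_eq {T : Type*} (f : T → SizedPerm) (hf : Function.Injective f) (n : ℕ) :
    Finite {x // (f x).1 = n} := by
  have : Finite {π : SizedPerm // π.1 = n} :=
    Finite.of_surjective (α := Perm n) (fun π => ⟨⟨n, π⟩, rfl⟩) <| by
      rintro ⟨⟨_, π⟩, rfl⟩
      exact ⟨π, rfl⟩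
  exact Finite.of_injective (fun x => (⟨f x.1, x.2⟩ : {π : SizedPerm // π.1 = n})) fun x y h =>
    Subtype.ext (hf (congrArg Subtype.val h))

theorem sizeGenFun_plift (p : Prop) [Decidable p] :
    sizeGenFun (fun _ : PLift p => 1) = ((if p then Polynomial.X else 0 : Polynomial ℚ) :
      PowerSeries ℚ) := by
  ext n
  rw [sizeGenFun, PowerSeries.coeff_mk, Polynomial.coeff_coe]
  by_cases hp : p
  · rw [if_pos hp, Polynomial.coeff_X]
    by_cases hn : 1 = n
    · have : Unique {_x : PLift p // 1 = n} := ⟨⟨⟨⟨hp⟩, hn⟩⟩, fun _ => rfl⟩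
      rw [if_pos hn, Nat.card_unique, Nat.cast_one]
    · have : IsEmpty {_x : PLift p // 1 = n} := ⟨fun x => hn x.2⟩
      rw [if_neg hn, Nat.card_of_isEmpty, Nat.cast_zero]
  · have : IsEmpty {_x : PLift p // 1 = n} := ⟨fun x => hp x.1.down⟩
    rw [if_neg hp, Nat.card_of_isEmpty, Nat.cast_zero, Polynomial.coeff_zero]

theorem finite_sum_eq {m : ℕ} {T : Fin m → Type*} (s : ∀ i, T i → ℕ)
    (hs : ∀ i n, Finite {x // s i x = n}) (n : ℕ) :
    Finite {x : ∀ i, T i // ∑ i, s i (x i) = n} := by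
  have hle : ∀ (x : {x : ∀ i, T i // ∑ i, s i (x i) = n}) i, s i (x.1 i) < n + 1 := fun x i =>
    Nat.lt_succ_of_le ((Finset.single_le_sum (f := fun i => s i (x.1 i))
      (fun _ _ => Nat.zero_le _) (Finset.mem_univ i)).trans_eq x.2)
  exact Finite.of_injective (β := ∀ i, Σ j : Fin (n + 1), {x // s i x = j})
    (fun x i => ⟨⟨_, hle x i⟩, x.1 i, rfl⟩) fun x y h => Subtype.ext <| funext fun i =>
      congrArg (fun z : Σ j : Fin (n + 1), {x // s i x = j} => z.2.1) (congrFun h i)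

theorem sizeGenFun_sum_sigma_pi {κ : Type*} [Fintype κ] {m : κ → ℕ} {T : ∀ k, Fin (m k) → Type*}
    (s : ∀ k i, T k i → ℕ) (hs : ∀ k i n, Finite {x // s k i x = n}) (p : Prop) [Decidable p] :
    sizeGenFun (Sum.elim (fun _ : PLift p => 1) fun x : Σ k, ∀ i, T k i =>
      ∑ i, s x.1 i (x.2 i)) = ((if p then Polynomial.X else 0 : Polynomial ℚ) : PowerSeries ℚ) +
        ∑ k, ∏ i, sizeGenFun (s k i) := by
  have hfin : ∀ k n, Finite {x : ∀ i, T k i // ∑ i, s k i (x i) = n} := fun k n =>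
    finite_sum_eq (s k) (hs k) n
  rw [sizeGenFun_sum, sizeGenFun_plift,
    sizeGenFun_sigma (fun k (x : ∀ i, T k i) => ∑ i, s k i (x i)) hfin]
  · exact congrArg _ (Finset.sum_congr rfl fun k _ => sizeGenFun_pi (s k) (hs k))
  · exact fun n => Subtype.finite
  · exact fun n => Finite.of_surjective
      (α := Σ k, {x : ∀ i, T k i // ∑ i, s k i (x i) = n}) (fun x => ⟨⟨x.1, x.2.1⟩, x.2.2⟩)
      fun x => ⟨⟨x.1.1, x.1.2, x.2⟩, rfl⟩

/-- The members of the inflation closure with a given state are enumerated by an algebraic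
generating function, if the state of an inflation is determined by the states of the blocks. -/
theorem isAlgebraic_sizeGenFun_of_state {Q : Type} [Finite Q] {S : Set SizedPerm} (hfin : S.Finite)
    (hS : ∀ s ∈ S, 2 ≤ s.1) (hsimple : ∀ s ∈ S, IsSimple s.2) (f : SizedPerm → Q)
    (hred : ∀ s ∈ S, ∀ α β : Fin s.1 → SizedPerm, (∀ i, f (α i) = f (β i)) →
      IsReducedInflation s.2 α → IsReducedInflation s.2 β)
    (hinf : ∀ s ∈ S, ∀ α β : Fin s.1 → SizedPerm, (∀ i, InflationClosure S (α i)) →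
      (∀ i, InflationClosure S (β i)) → (∀ i, f (α i) = f (β i)) →
      f ⟨_, inflate s.2 α⟩ = f ⟨_, inflate s.2 β⟩) (q : Q) :
    IsAlgebraic (Polynomial ℚ)
      (sizeGenFun fun x : {π : SizedPerm // InflationClosure S π ∧ f π = q} => x.1.1) := by
  classical
  have := Fintype.ofFinite Q
  have := hfin.fintype
  let κ : Q → Type := fun q => {k : Σ s : S, (Fin s.1.1 → Q) //
    ∃ α : Fin k.1.1.1 → SizedPerm, (∀ i, InflationClosure S (α i)) ∧ (∀ i, f (α i) = k.2 i) ∧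
      IsReducedInflation k.1.1.2 α ∧ f ⟨_, inflate k.1.1.2 α⟩ = q}
  have hfinite : ∀ q n, Finite {x : {π : SizedPerm // InflationClosure S π ∧ f π = q} //
      x.1.1 = n} := fun q n => finite_length_eq _ Subtype.val_injective n
  refine isAlgebraic_of_system
    (fun q => sizeGenFun fun x : {π : SizedPerm // InflationClosure S π ∧ f π = q} => x.1.1)
    (fun q => ?_) κ (fun q k => k.1.1.1.1) (fun q k => hS _ k.1.1.2) (fun q k => k.1.2)
    (fun q => if f ⟨1, 1⟩ = q then Polynomial.X else 0) (fun q => ?_) q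
  · have : IsEmpty {x : {π : SizedPerm // InflationClosure S π ∧ f π = q} // x.1.1 = 0} :=
      ⟨fun x => (x.1.2.1.length_pos hS).ne' x.2⟩
    rw [sizeGenFun, ← PowerSeries.coeff_zero_eq_constantCoeff_apply, PowerSeries.coeff_mk,
      Nat.card_of_isEmpty, Nat.cast_zero]
  · let X : Type := PLift (f ⟨1, 1⟩ = q) ⊕ Σ k : κ q, ∀ i,
      {π : SizedPerm // InflationClosure S π ∧ f π = k.1.2 i}
    let size : X → ℕ := Sum.elim (fun _ => 1) fun x => ∑ i, (x.2 i).1.1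
    let toFun : X → {π : SizedPerm // InflationClosure S π ∧ f π = q} := Sum.elim
      (fun h => ⟨⟨1, 1⟩, .one 1, h.down⟩)
      fun x => ⟨⟨_, inflate x.1.1.1.1.2 fun i => (x.2 i).1⟩, by
        obtain ⟨⟨⟨⟨s, hs⟩, t⟩, β, hβ, hβt, hβr, hβq⟩, α⟩ := x
        have hαβ : ∀ i, f (β i) = f (α i).1 := fun i => (hβt i).trans (α i).2.2.symm
        exact ⟨.inflate s hs _ (fun i => (α i).2.1) (hred s hs _ _ hαβ hβr),
          (hinf s hs _ _ hβ (fun i => (α i).2.1) hαβ).symm.trans hβq⟩⟩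
    have hsize : ∀ x, (toFun x).1.1 = size x := by
      rintro (x | x) <;> rfl
    have hinj : Function.Injective toFun := by
      have hne : ∀ x : Σ k : κ q, ∀ i, {π : SizedPerm // InflationClosure S π ∧ f π = k.1.2 i},
          ∑ i, (x.2 i).1.1 ≠ 1 := fun x h => by
        have h2 := hS _ x.1.1.1.2
        have h3 := block_length_lt h2 (fun i => (x.2 i).2.1.length_pos hS) ⟨0, by omega⟩
        have h4 := (x.2 ⟨0, by omega⟩).2.1.length_pos hS
        omega
      rintro (x | x) (y | y) h
      · exact congrArg Sum.inl (Subsingleton.elim x y)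
      · have h1 := congrArg (fun z => z.1.1) h
        exact absurd h1.symm (hne y)
      · have h1 := congrArg (fun z => z.1.1) h
        exact absurd h1 (hne x)
      · obtain ⟨⟨⟨⟨s, hs⟩, t⟩, ht⟩, α⟩ := x
        obtain ⟨⟨⟨⟨s', hs'⟩, t'⟩, ht'⟩, α'⟩ := y
        have hr := (toFun (Sum.inr ⟨⟨⟨⟨s, hs⟩, t⟩, ht⟩, α⟩)).2.1
        have hαr : IsReducedInflation s.2 fun i => (α i).1 := by
          obtain ⟨β, hβ, hβt, hβr, hβq⟩ := ht
          exact hred s hs _ _ (fun i => (hβt i).trans (α i).2.2.symm) hβr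
        have hαr' : IsReducedInflation s'.2 fun i => (α' i).1 := by
          obtain ⟨β, hβ, hβt, hβr, hβq⟩ := ht'
          exact hred s' hs' _ _ (fun i => (hβt i).trans (α' i).2.2.symm) hβr
        have h1 := inflate_unique (congrArg Subtype.val h) (fun i => (α i).2.1.length_pos hS)
          (fun i => (α' i).2.1.length_pos hS) (hsimple s hs) (hsimple s' hs') (hS s hs)
          (hS s' hs') hαr hαr'
        obtain ⟨h2, h3⟩ := Sigma.mk.inj_iff.mp h1
        obtain rfl : s = s' := h2
        have h4 : ∀ i, (α i).1 = (α' i).1 := congrFun (eq_of_heq h3)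
        obtain rfl : t = t' := funext fun i => by
          have h5 := (α i).2.2
          have h6 := (α' i).2.2
          rw [← h4 i] at h6
          exact h5.symm.trans h6
        obtain rfl : α = α' := funext fun i => Subtype.ext (h4 i)
        rfl
    have hsurj : Function.Surjective toFun := by
      rintro ⟨π, hπ, hq⟩
      cases hπ with
      | one π =>
        obtain rfl : π = 1 := Subsingleton.elim _ _
        exact ⟨Sum.inl ⟨hq⟩, rfl⟩
      | inflate s hs α hα hr =>
        exact ⟨Sum.inr ⟨⟨⟨⟨s, hs⟩, fun i => f (α i)⟩, α, hα, fun _ => rfl, hr, hq⟩,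
          fun i => ⟨α i, hα i, rfl⟩⟩, rfl⟩
    rw [← sizeGenFun_congr (Equiv.ofBijective toFun ⟨hinj, hsurj⟩) hsize]
    exact sizeGenFun_sum_sigma_pi (fun (k : κ q) i
      (x : {π : SizedPerm // InflationClosure S π ∧ f π = k.1.2 i}) => x.1.1)
      (fun k i n => hfinite _ n) _

theorem genFun_eq_sizeGenFun (A : ∀ n, Set (Perm n)) :
    genFun A = sizeGenFun fun x : {π : SizedPerm // 0 < π.1 ∧ π.2 ∈ A π.1} => x.1.1 := by
  ext n
  rw [genFun, sizeGenFun, PowerSeries.coeff_mk, PowerSeries.coeff_mk]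
  split_ifs with hn
  · have : IsEmpty {x : {π : SizedPerm // 0 < π.1 ∧ π.2 ∈ A π.1} // x.1.1 = n} :=
      ⟨fun x => x.1.2.1.ne' (x.2.trans hn)⟩
    rw [Nat.card_of_isEmpty, Nat.cast_zero]
  · refine congrArg _ (Nat.card_eq_of_bijective
      (fun π : A n => ⟨⟨⟨n, π.1⟩, Nat.pos_of_ne_zero hn, π.2⟩, rfl⟩) ⟨fun π τ h => ?_, ?_⟩)
    · have := congrArg (fun x => x.1.1) h
      exact Subtype.ext (eq_of_heq (Sigma.mk.inj_iff.mp this).2)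
    · rintro ⟨⟨⟨_, π⟩, h0, hπ⟩, rfl⟩
      exact ⟨⟨π, hπ⟩, rfl⟩

/-- If `C` is a permutation class containing only finitely many simple permutations,
then the generating function of the set of Dumont permutations of the first kind in `C`
is algebraic over `ℚ[x]`. -/
theorem statement3 (C : ∀ n, Set (Perm n)) (hC : IsPermClass C)
    (hfin : FinitelyManySimples C) :
    IsAlgebraicOverQx (genFun fun n => {π : Perm n | π ∈ C n ∧ Dumont π}) := by
  classical
  let S : Set SizedPerm := {s | 2 ≤ s.1 ∧ s.2 ∈ C s.1 ∧ IsSimple s.2}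
  have hS : S.Finite := hfin.subset fun s hs => hs.2
  have hS2 : ∀ s ∈ S, 2 ≤ s.1 := fun s hs => hs.1
  obtain ⟨N, hN⟩ := exists_pattern_bound hS hS2 hC
  let good : PermState N → Prop := fun q => q.2.2.1 0 False ∧
    ∀ (γ : SizedPerm) (h : γ.1 ≤ N), ⟨⟨γ.1, Nat.lt_succ_of_le h⟩, γ.2⟩ ∈ q.1 → γ.2 ∈ C γ.1
  have hgood : ∀ π : SizedPerm, (0 < π.1 ∧ π.2 ∈ C π.1 ∧ Dumont π.2) ↔
      InflationClosure S π ∧ good (permState N π) := fun π => by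
    rw [dumont_iff_parityDescents]
    constructor
    · rintro ⟨h0, hπ, hd⟩
      have hW := inflationClosure_of_mem hC (S := S) (fun s h h' h'' => ⟨h, h', h''⟩) _ _ h0 hπ
      exact ⟨hW, hd, (hN π hW).mp hπ⟩
    · rintro ⟨hW, hd, hπ⟩
      exact ⟨hW.length_pos hS2, (hN π hW).mpr hπ, hd⟩
  have halg := isAlgebraic_sizeGenFun_of_state hS hS2 (fun s hs => hs.2.2) (permState N)
    (fun s _ α β h => isReducedInflation_of_permState_eq h) fun s hs α β hα hβ h =>
      permState_inflate_congr hs.1 hs.2.2 (fun i => (hα i).length_pos hS2)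
        (fun i => (hβ i).length_pos hS2) h
  have := Fintype.ofFinite {q // good q}
  have hsum : (genFun fun n => {π : Perm n | π ∈ C n ∧ Dumont π}) = ∑ q : {q // good q},
      sizeGenFun fun x : {π : SizedPerm // InflationClosure S π ∧ permState N π = q} => x.1.1 := by
    rw [genFun_eq_sizeGenFun, ← sizeGenFun_sigma (fun (q : {q // good q})
      (x : {π : SizedPerm // InflationClosure S π ∧ permState N π = q}) => x.1.1)
      fun q n => finite_length_eq _ Subtype.val_injective n]
    refine sizeGenFun_congr
      { toFun x := ⟨⟨permState N x.1, ((hgood x.1).mp x.2).2⟩, x.1, ((hgood x.1).mp x.2).1, rfl⟩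
        invFun x := ⟨x.2.1, (hgood x.2.1).mpr ⟨x.2.2.1, x.2.2.2.symm ▸ x.1.2⟩⟩
        left_inv _ := rfl
        right_inv := ?_ } fun _ => rfl
    rintro ⟨⟨q, hq⟩, π, hπ, hπq⟩
    cases hπq
    rfl
  rw [isAlgebraicOverQx_iff, hsum]
  exact (Subalgebra.algebraicClosure (Polynomial ℚ) (PowerSeries ℚ)).sum_mem fun q _ => halg q
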